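/- (Threshold for PPT, balanced case) Let c ∈ (0,∞), c ≠ 4, and let (s_n)_{n≥1} be positive integers with s_n/n² → c as n → ∞. For each n, let G_n ∈ M_{n²×s_n}(ℂ) be a random matrix with i.i.d. standard complex Gaussian entries and let ρ_n = G_n G_n*/Tr(G_n G_n*), a random density matrix in M_{n²}(ℂ) with the induced distribution ν_{n²,s_n}, whose rows and columns are indexed by pairs in {1,…,n}×{1,…,n}. Let ρ_n^Γ denote the partial transpose, (ρ_n^Γ)_{(i,a),(j,b)} = (ρ_n)_{(i,b),(j,a)}. Then: (i) if c < 4, P[ρ_n^Γ is positive semidefinite] → 0 as n → ∞; (ii) if c > 4, P[ρ_n^Γ is positive semidefinite] → 1 as n → ∞. In other words, the threshold for the PPT property of induced random states on ℂ^n ⊗ ℂ^n, on the scale s ∼ c·n², is c₀ = 4. -/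

import Mathlib

open MeasureTheory ProbabilityTheory Matrix Filter
open scoped ComplexOrder

/-- The standard complex Gaussian distribution: the law of `(g₁ + i·g₂)/√2` where `g₁, g₂` are
independent real `N(0,1)` variables; it satisfies `E|z|² = 1`. -/
noncomputable def stdComplexGaussian : Measure ℂ :=
  Measure.map (fun p : ℝ × ℝ => (p.1 + p.2 * Complex.I) / (Real.sqrt 2 : ℝ))
    ((gaussianReal 0 1).prod (gaussianReal 0 1))

/-- The partial transpose (on the second factor):
`(ρ^Γ)_{(i,a),(j,b)} = ρ_{(i,b),(j,a)}`. -/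
def partialTranspose {n k : ℕ}
    (ρ : Matrix (Fin n × Fin k) (Fin n × Fin k) ℂ) :
    Matrix (Fin n × Fin k) (Fin n × Fin k) ℂ :=
  Matrix.of fun p q => ρ (p.1, q.2) (q.1, p.2)


namespace PPT
section Cycles
set_option linter.unusedSectionVars false
open Equiv Equiv.Perm Finset
variable {V : Type*} [Fintype V] [DecidableEq V]

/-- The orbit (cycle) of `x`. -/
def orb (σ : Perm V) (x : V) : Finset V := univ.filter (fun y => σ.SameCycle x y)

/-- The set of all cycles (including fixed points). -/
def cycs (σ : Perm V) : Finset (Finset V) := univ.image (orb σ)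

/-- The number of cycles (including fixed points). -/
def cyc (σ : Perm V) : ℕ := (cycs σ).card

lemma mem_orb {σ : Perm V} {x y : V} : y ∈ orb σ x ↔ σ.SameCycle x y := by simp [orb]

lemma self_mem_orb (σ : Perm V) (x : V) : x ∈ orb σ x := mem_orb.2 (SameCycle.refl _ _)

lemma orb_eq_iff {σ : Perm V} {x y : V} : orb σ x = orb σ y ↔ σ.SameCycle x y := by
  constructor
  · intro h
    have := self_mem_orb σ y
    rw [← h] at this
    exact mem_orb.1 this
  · intro h
    ext z
    rw [mem_orb, mem_orb]
    exact ⟨fun h' => h.symm.trans h', fun h' => h.trans h'⟩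

lemma orb_mem_cycs (σ : Perm V) (x : V) : orb σ x ∈ cycs σ := mem_image_of_mem _ (mem_univ _)

lemma mem_cycs {σ : Perm V} {C : Finset V} : C ∈ cycs σ ↔ ∃ x, orb σ x = C := by simp [cycs]

lemma apply_mem_orb {σ : Perm V} {x y : V} (h : y ∈ orb σ x) : σ y ∈ orb σ x := by
  rw [mem_orb] at *
  exact sameCycle_apply_right.2 h

lemma orb_subset {σ : Perm V} {S : Finset V} (hS : ∀ z ∈ S, σ z ∈ S) {x : V} (hx : x ∈ S) :
    orb σ x ⊆ S := by
  intro z hz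
  obtain ⟨i, rfl⟩ := (mem_orb.1 hz).exists_nat_pow_eq
  clear hz
  induction i with
  | zero => simpa using hx
  | succ i ih => rw [pow_succ']; exact hS _ ih

lemma orb_eq_of_mem {σ : Perm V} {x y : V} (h : y ∈ orb σ x) : orb σ y = orb σ x :=
  (orb_eq_iff.2 (mem_orb.1 h)).symm

lemma cycs_eq_of_mem {σ : Perm V} {C : Finset V} (hC : C ∈ cycs σ) {x : V} (hx : x ∈ C) :
    C = orb σ x := by
  obtain ⟨y, rfl⟩ := mem_cycs.1 hC
  exact (orb_eq_of_mem hx).symm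

/-- Sum over all elements, cycle by cycle. -/
lemma sum_cycs {M : Type*} [AddCommMonoid M] (σ : Perm V) (φ : V → M) :
    ∑ C ∈ cycs σ, ∑ i ∈ C, φ i = ∑ i, φ i := by
  rw [← Finset.sum_fiberwise_of_maps_to (s := univ) (t := cycs σ) (g := orb σ)
    (fun i _ => orb_mem_cycs σ i)]
  refine sum_congr rfl fun C hC => sum_congr ?_ fun _ _ => rfl
  ext i
  simp only [mem_filter, mem_univ, true_and]
  constructor
  · intro hi; exact (cycs_eq_of_mem hC hi).symm
  · rintro rfl; exact self_mem_orb _ _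

lemma orb_inv (σ : Perm V) (x : V) : orb σ⁻¹ x = orb σ x := by
  ext z; simp [mem_orb, sameCycle_inv]

lemma cyc_inv (σ : Perm V) : cyc σ⁻¹ = cyc σ := by
  unfold cyc cycs
  rw [show orb σ⁻¹ = orb σ from funext (orb_inv σ)]

lemma cyc_conj (σ τ : Perm V) : cyc (τ * σ * τ⁻¹) = cyc σ := by
  unfold cyc
  refine (Finset.card_bij (fun C _ => C.map τ.toEmbedding) ?_ ?_ ?_).symm
  · intro C hC
    obtain ⟨x, rfl⟩ := mem_cycs.1 hC
    refine mem_cycs.2 ⟨τ x, ?_⟩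
    ext z
    simp only [mem_orb, mem_map_equiv, sameCycle_conj]
    simp [Perm.inv_def]
  · intro C _ D _ h
    exact Finset.map_injective _ h
  · intro C hC
    obtain ⟨x, rfl⟩ := mem_cycs.1 hC
    refine ⟨orb σ (τ⁻¹ x), orb_mem_cycs _ _, ?_⟩
    ext z
    simp only [mem_orb, mem_map_equiv, sameCycle_conj]
    simp [Perm.inv_def]

lemma cyc_mul_comm (σ τ : Perm V) : cyc (σ * τ) = cyc (τ * σ) := by
  rw [← cyc_conj (τ * σ) σ]; congr 1; group

/-- `τ = σ * swap x y` in the non-affected region. -/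
lemma mulswap_apply_of_ne (σ : Perm V) {x y z : V} (h1 : z ≠ x) (h2 : z ≠ y) :
    (σ * swap x y) z = σ z := by
  rw [Perm.mul_apply, swap_apply_of_ne_of_ne h1 h2]

lemma orb_mulswap_other (σ : Perm V) {x y z : V} (hx : z ∉ orb σ x) (hy : z ∉ orb σ y) :
    orb (σ * swap x y) z = orb σ z := by
  have key : ∀ w ∈ orb σ z, (σ * swap x y) w = σ w := by
    intro w hw
    apply mulswap_apply_of_ne
    · rintro rfl; exact hx (mem_orb.2 (mem_orb.1 hw).symm)
    · rintro rfl; exact hy (mem_orb.2 (mem_orb.1 hw).symm)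
  apply Finset.Subset.antisymm
  · apply orb_subset
    · intro w hw; rw [key w hw]; exact apply_mem_orb hw
    · exact self_mem_orb _ _
  · intro w hw
    obtain ⟨i, rfl⟩ := (mem_orb.1 hw).exists_nat_pow_eq
    clear hw
    induction i with
    | zero => exact self_mem_orb _ _
    | succ i ih =>
      have h1 := apply_mem_orb ih
      rw [key _ (mem_orb.2 ⟨i, by simp⟩)] at h1
      rwa [pow_succ']

lemma orb_merge (σ : Perm V) {x y : V} (h : ¬ σ.SameCycle x y) {z : V}
    (hz : z ∈ orb σ x ∪ orb σ y) :
    orb (σ * swap x y) z = orb σ x ∪ orb σ y := by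
  have hxy : x ≠ y := by rintro rfl; exact h (SameCycle.refl _ _)
  set τ := σ * swap x y with hτ
  have τx : τ x = σ y := by simp [hτ]
  have τy : τ y = σ x := by simp [hτ]
  have closed : ∀ w ∈ orb σ x ∪ orb σ y, τ w ∈ orb σ x ∪ orb σ y := by
    intro w hw
    by_cases h1 : w = x
    · rw [h1, τx]; exact mem_union_right _ (apply_mem_orb (self_mem_orb _ _))
    by_cases h2 : w = y
    · rw [h2, τy]; exact mem_union_left _ (apply_mem_orb (self_mem_orb _ _))
    rw [hτ, mulswap_apply_of_ne σ h1 h2]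
    rcases mem_union.1 hw with hw | hw
    · exact mem_union_left _ (apply_mem_orb hw)
    · exact mem_union_right _ (apply_mem_orb hw)
  -- every element of orb σ x is reached from y, until x
  have reach : ∀ a b : V, ¬ σ.SameCycle a b → (τ b = σ a) →
      (∀ w, w ≠ a → w ≠ b → τ w = σ w) → orb σ a ⊆ orb τ b := by
    intro a b hab hb hw
    obtain ⟨k, hk⟩ : ∃ k : ℕ, 0 < k ∧ (σ ^ k) a = a :=
      ⟨orderOf σ, orderOf_pos σ, by simp [pow_orderOf_eq_one]⟩
    have P : ∀ i : ℕ, (σ ^ (i + 1)) a ∈ orb τ b := by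
      intro i
      induction i with
      | zero => rw [zero_add, pow_one, ← hb]; exact apply_mem_orb (self_mem_orb _ _)
      | succ i ih =>
        by_cases h1 : (σ ^ (i + 1)) a = a
        · rw [pow_succ', Perm.mul_apply, h1, ← hb]; exact apply_mem_orb (self_mem_orb _ _)
        · have h2 : (σ ^ (i + 1)) a ≠ b := fun h => hab ⟨(i + 1 : ℕ), by rw [zpow_natCast]; exact h⟩
          rw [pow_succ', Perm.mul_apply, ← hw _ h1 h2]
          exact apply_mem_orb ih
    intro w hw'
    obtain ⟨i, rfl⟩ := (mem_orb.1 hw').exists_nat_pow_eq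
    rcases i with _ | i
    · have := P (k - 1)
      rw [Nat.sub_add_cancel hk.1, hk.2] at this
      simpa using this
    · exact P i
  have r1 := reach x y h τy (fun w h1 h2 => mulswap_apply_of_ne σ h1 h2)
  have r2 := reach y x (fun h' => h h'.symm) τx (fun w h1 h2 => mulswap_apply_of_ne σ h2 h1)
  have hxy' : orb τ x = orb τ y := orb_eq_of_mem (r1 (self_mem_orb _ _))
  have e : orb τ x = orb σ x ∪ orb σ y := by
    apply Finset.Subset.antisymm
    · exact orb_subset closed (mem_union_left _ (self_mem_orb _ _))
    · apply union_subset
      · rw [hxy']; exact r1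
      · exact r2
  rw [← e] at hz ⊢
  exact orb_eq_of_mem hz

lemma cycs_merge (σ : Perm V) {x y : V} (h : ¬ σ.SameCycle x y) :
    cycs (σ * swap x y) =
      insert (orb σ x ∪ orb σ y) (((cycs σ).erase (orb σ x)).erase (orb σ y)) := by
  ext C
  simp only [mem_insert, mem_erase]
  constructor
  · intro hC
    obtain ⟨z, rfl⟩ := mem_cycs.1 hC
    by_cases hz : z ∈ orb σ x ∪ orb σ y
    · left; exact orb_merge σ h hz
    · right
      rw [mem_union, not_or] at hz
      rw [orb_mulswap_other σ hz.1 hz.2]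
      refine ⟨?_, ?_, orb_mem_cycs _ _⟩
      · intro h'; exact hz.2 (h' ▸ self_mem_orb _ _)
      · intro h'; exact hz.1 (h' ▸ self_mem_orb _ _)
  · rintro (rfl | ⟨h1, h2, h3⟩)
    · rw [← orb_merge σ h (mem_union_left _ (self_mem_orb σ x))]; exact orb_mem_cycs _ _
    · obtain ⟨z, rfl⟩ := mem_cycs.1 h3
      rw [← orb_mulswap_other σ (x := x) (y := y) (z := z)]
      · exact orb_mem_cycs _ _
      · intro h'; exact h2 (orb_eq_of_mem h')
      · intro h'; exact h1 (orb_eq_of_mem h')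

lemma merge_notMem (σ : Perm V) {x y : V} :
    (orb σ x ∪ orb σ y) ∉ (((cycs σ).erase (orb σ x)).erase (orb σ y)) := by
  intro h
  simp only [mem_erase] at h
  obtain ⟨_, h2, h3⟩ := h
  exact h2 (cycs_eq_of_mem h3 (mem_union_left _ (self_mem_orb σ x)))

lemma cyc_merge (σ : Perm V) {x y : V} (h : ¬ σ.SameCycle x y) :
    cyc (σ * swap x y) + 1 = cyc σ := by
  unfold cyc
  rw [cycs_merge σ h, card_insert_of_notMem (merge_notMem σ), card_erase_of_mem, card_erase_of_mem]
  · have : 2 ≤ (cycs σ).card := by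
      rw [← card_pair (a := orb σ x) (b := orb σ y)]
      · apply card_le_card; intro C; simp only [mem_insert, mem_singleton]
        rintro (rfl | rfl) <;> exact orb_mem_cycs _ _
      · intro h'; exact h (orb_eq_iff.1 h')
    omega
  · exact orb_mem_cycs _ _
  · rw [mem_erase]; exact ⟨fun h' => h (orb_eq_iff.1 h'.symm), orb_mem_cycs _ _⟩

lemma prod_merge {M : Type*} [CommMonoid M] (g : Finset V → M) (σ : Perm V) {x y : V}
    (h : ¬ σ.SameCycle x y) :
    (∏ C ∈ cycs (σ * swap x y), g C) * (g (orb σ x) * g (orb σ y)) =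
      (∏ C ∈ cycs σ, g C) * g (orb σ x ∪ orb σ y) := by
  rw [cycs_merge σ h, prod_insert (merge_notMem σ),
    ← Finset.mul_prod_erase (cycs σ) g (orb_mem_cycs σ x),
    ← Finset.mul_prod_erase ((cycs σ).erase (orb σ x)) g (a := orb σ y)]
  · ac_rfl
  · rw [mem_erase]; exact ⟨fun h' => h (orb_eq_iff.1 h'.symm), orb_mem_cycs _ _⟩

/-- first positive time at which `y` is reached from `x` -/
noncomputable def arcLen (σ : Perm V) (x y : V) : ℕ := sInf {k | 0 < k ∧ (σ ^ k) x = y}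

/-- the arc `(x, y]` -/
noncomputable def arc (σ : Perm V) (x y : V) : Finset V :=
  (Finset.Icc 1 (arcLen σ x y)).image (fun i => (σ ^ i) x)

lemma arcLen_spec {σ : Perm V} {x y : V} (h : σ.SameCycle x y) :
    0 < arcLen σ x y ∧ (σ ^ (arcLen σ x y)) x = y := by
  have : {k | 0 < k ∧ (σ ^ k) x = y}.Nonempty := by
    obtain ⟨i, h0, _, h2⟩ := h.exists_pow_eq''
    exact ⟨i, h0, h2⟩
  exact Nat.sInf_mem this

lemma arcLen_min {σ : Perm V} {x y : V} {i : ℕ} (h0 : 0 < i) (hi : i < arcLen σ x y) :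
    (σ ^ i) x ≠ y := fun h => Nat.notMem_of_lt_sInf hi ⟨h0, h⟩

lemma arcLen_ne_self {σ : Perm V} {x y : V} (h : σ.SameCycle x y) (hxy : x ≠ y) {i : ℕ}
    (h0 : 0 < i) (hi : i ≤ arcLen σ x y) : (σ ^ i) x ≠ x := by
  intro h'
  have h1 := arcLen_spec h
  rcases hi.eq_or_lt with hi | hi
  · rw [hi, h1.2] at h'; exact hxy h'.symm
  · refine arcLen_min (σ := σ) (x := x) (y := y) (i := arcLen σ x y - i) (by omega) (by omega) ?_
    have : (σ ^ (arcLen σ x y - i)) ((σ ^ i) x) = y := by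
      rw [← Perm.mul_apply, ← pow_add, Nat.sub_add_cancel hi.le]; exact h1.2
    rwa [h'] at this

lemma mem_arc_right {σ : Perm V} {x y : V} (h : σ.SameCycle x y) : y ∈ arc σ x y :=
  mem_image.2 ⟨arcLen σ x y, mem_Icc.2 ⟨(arcLen_spec h).1, le_rfl⟩, (arcLen_spec h).2⟩

lemma notMem_arc_left {σ : Perm V} {x y : V} (h : σ.SameCycle x y) (hxy : x ≠ y) :
    x ∉ arc σ x y := by
  intro h'
  obtain ⟨i, hi, h2⟩ := mem_image.1 h'
  rw [mem_Icc] at hi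
  exact arcLen_ne_self h hxy (by omega) hi.2 h2

lemma arc_subset {σ : Perm V} {x y : V} : arc σ x y ⊆ orb σ x := by
  intro z hz
  obtain ⟨i, _, rfl⟩ := mem_image.1 hz
  exact mem_orb.2 ⟨i, by simp⟩

lemma orb_split_right {σ : Perm V} {x y : V} (h : σ.SameCycle x y) (hxy : x ≠ y) :
    orb (σ * swap x y) y = arc σ x y := by
  set τ := σ * swap x y with hτ
  have τy : τ y = σ x := by simp [hτ]
  have sp := arcLen_spec h
  have step : ∀ i, 0 < i → i < arcLen σ x y → τ ((σ ^ i) x) = (σ ^ (i + 1)) x := by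
    intro i h0 hi
    rw [hτ, mulswap_apply_of_ne σ (arcLen_ne_self h hxy h0 hi.le) (arcLen_min h0 hi), pow_succ',
      Perm.mul_apply]
  apply Finset.Subset.antisymm
  · apply orb_subset _ (mem_arc_right h)
    intro z hz
    obtain ⟨i, hi, rfl⟩ := mem_image.1 hz
    rw [mem_Icc] at hi
    rcases hi.2.eq_or_lt with h1 | h1
    · rw [h1, sp.2, τy]
      exact mem_image.2 ⟨1, mem_Icc.2 ⟨le_rfl, sp.1⟩, by simp⟩
    · rw [step i hi.1 h1]
      exact mem_image.2 ⟨i + 1, mem_Icc.2 ⟨by omega, h1⟩, rfl⟩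
  · intro z hz
    obtain ⟨i, hi, rfl⟩ := mem_image.1 hz
    rw [mem_Icc] at hi
    have : ∀ i, i < arcLen σ x y → (σ ^ (i + 1)) x ∈ orb τ y := by
      intro i
      induction i with
      | zero => intro _; rw [zero_add, pow_one, ← τy]; exact apply_mem_orb (self_mem_orb _ _)
      | succ i ih =>
        intro hi
        rw [← step (i + 1) (by omega) hi]
        exact apply_mem_orb (ih (by omega))
    have h2 := this (i - 1) (by omega)
    rwa [Nat.sub_add_cancel hi.1] at h2

lemma orb_split_left {σ : Perm V} {x y : V} (h : σ.SameCycle x y) (hxy : x ≠ y) :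
    orb (σ * swap x y) x = orb σ x \ arc σ x y := by
  have hA := orb_split_right h hxy
  have hxA := notMem_arc_left h hxy
  set τ := σ * swap x y with hτ
  have τx : τ x = σ y := by simp [hτ]
  have τy : τ y = σ x := by simp [hτ]
  have hdisj : ∀ w ∈ orb τ x, w ∉ arc σ x y := by
    intro w hw hw'
    rw [← hA] at hw' hxA
    exact hxA (mem_orb.2 ((mem_orb.1 hw').trans (mem_orb.1 hw).symm))
  apply Finset.Subset.antisymm
  · intro z hz
    refine Finset.mem_sdiff.2 ⟨?_, hdisj z hz⟩
    revert z
    apply orb_subset _ (self_mem_orb _ _)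
    intro w hw
    by_cases h1 : w = x
    · rw [h1, τx]; exact apply_mem_orb (mem_orb.2 h)
    by_cases h2 : w = y
    · rw [h2, τy]; exact apply_mem_orb (self_mem_orb _ _)
    rw [hτ, mulswap_apply_of_ne σ h1 h2]; exact apply_mem_orb hw
  · intro z hz
    rw [Finset.mem_sdiff] at hz
    obtain ⟨hz, hz'⟩ := hz
    obtain ⟨i, rfl⟩ := (mem_orb.1 hz).exists_nat_pow_eq
    have : ∀ i : ℕ, (σ ^ i) x ∈ arc σ x y ∨ (σ ^ i) x ∈ orb τ x := by
      intro i
      induction i with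
      | zero => right; exact self_mem_orb _ _
      | succ i ih =>
        rw [pow_succ', Perm.mul_apply]
        by_cases h1 : (σ ^ i) x = x
        · left; rw [h1, ← τy, ← hA]; exact apply_mem_orb (self_mem_orb _ _)
        by_cases h2 : (σ ^ i) x = y
        · right; rw [h2, ← τx]; exact apply_mem_orb (self_mem_orb _ _)
        rw [← mulswap_apply_of_ne σ h1 h2, ← hτ]
        rcases ih with ih | ih
        · left; rw [← hA] at ih ⊢; exact apply_mem_orb ih
        · right; exact apply_mem_orb ih
    exact (this i).resolve_left hz'

lemma not_sameCycle_split {σ : Perm V} {x y : V} (h : σ.SameCycle x y) (hxy : x ≠ y) :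
    ¬ (σ * swap x y).SameCycle x y := by
  intro h'
  have h2 : y ∈ orb (σ * swap x y) x := mem_orb.2 h'
  rw [orb_split_left h hxy, Finset.mem_sdiff] at h2
  exact h2.2 (mem_arc_right h)

lemma cyc_split {σ : Perm V} {x y : V} (h : σ.SameCycle x y) (hxy : x ≠ y) :
    cyc (σ * swap x y) = cyc σ + 1 := by
  rw [← cyc_merge _ (not_sameCycle_split h hxy)]
  congr 2
  rw [mul_assoc, Equiv.swap_mul_self, mul_one]

lemma prod_split {M : Type*} [CommMonoid M] (g : Finset V → M) {σ : Perm V} {x y : V}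
    (h : σ.SameCycle x y) (hxy : x ≠ y) :
    (∏ C ∈ cycs (σ * swap x y), g C) * g (orb σ x) =
      (∏ C ∈ cycs σ, g C) * (g (orb σ x \ arc σ x y) * g (arc σ x y)) := by
  have := prod_merge g (σ * swap x y) (not_sameCycle_split h hxy)
  rw [orb_split_left h hxy, orb_split_right h hxy, mul_assoc σ, Equiv.swap_mul_self, mul_one,
    sdiff_union_of_subset arc_subset] at this
  exact this.symm

lemma arc_lt {σ : Perm V} {x y y' : V} (h : σ.SameCycle x y) (h' : σ.SameCycle x y')
    (hne : y ≠ y') (hle : arcLen σ x y ≤ arcLen σ x y') :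
    arc σ x y ⊆ arc σ x y' ∧ y' ∉ arc σ x y := by
  constructor
  · exact image_subset_image (Icc_subset_Icc_right hle)
  · intro hm
    obtain ⟨i, hi, h2⟩ := mem_image.1 hm
    rw [mem_Icc] at hi
    have h3 : arcLen σ x y' ≤ i := by
      by_contra h4
      exact arcLen_min (by omega) (not_le.1 h4) h2
    have : arcLen σ x y = arcLen σ x y' := by omega
    apply hne
    rw [← (arcLen_spec h).2, ← (arcLen_spec h').2, this]

/-- The sum over the free points of a cycle of a function of the two arcs. -/
lemma sum_arc {M : Type*} [AddCommMonoid M] (g : ℕ → ℕ → M) (σ : Perm V) (F : Finset V) {x : V}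
    (hx : x ∈ F) :
    ∑ y ∈ (F ∩ orb σ x).erase x,
      g (((orb σ x \ arc σ x y) ∩ ((F.erase x).erase y)).card)
        ((arc σ x y ∩ ((F.erase x).erase y)).card) =
    ∑ j ∈ Finset.range ((F ∩ orb σ x).card - 1), g ((F ∩ orb σ x).card - 2 - j) j := by
  set S := (F ∩ orb σ x).erase x with hS
  have hxS : x ∈ F ∩ orb σ x := mem_inter.2 ⟨hx, self_mem_orb _ _⟩
  have hSc : S.card = (F ∩ orb σ x).card - 1 := card_erase_of_mem hxS
  have mS : ∀ y ∈ S, y ≠ x ∧ y ∈ F ∧ σ.SameCycle x y := by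
    intro y hy
    rw [hS, mem_erase, mem_inter, mem_orb] at hy
    exact hy
  have c1 : ∀ y ∈ S, (arc σ x y ∩ ((F.erase x).erase y)).card + 1 = (arc σ x y ∩ F).card := by
    intro y hy
    obtain ⟨h1, h2, h3⟩ := mS y hy
    rw [← card_erase_add_one (s := arc σ x y ∩ F) (a := y)
      (mem_inter.2 ⟨mem_arc_right h3, h2⟩)]
    congr 2
    ext z
    simp only [mem_inter, mem_erase]
    constructor
    · tauto
    · rintro ⟨a, b, c⟩
      refine ⟨b, a, ?_, c⟩
      rintro rfl
      exact notMem_arc_left h3 (Ne.symm h1) b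
  have c2 : ∀ y ∈ S, ((orb σ x \ arc σ x y) ∩ ((F.erase x).erase y)).card
      = (F ∩ orb σ x).card - 2 - (arc σ x y ∩ ((F.erase x).erase y)).card := by
    intro y hy
    obtain ⟨h1, h2, h3⟩ := mS y hy
    have : ((orb σ x \ arc σ x y) ∩ ((F.erase x).erase y)).card +
        (arc σ x y ∩ ((F.erase x).erase y)).card = (F ∩ orb σ x).card - 2 := by
      rw [← card_union_of_disjoint]
      · have : (orb σ x \ arc σ x y) ∩ ((F.erase x).erase y) ∪ arc σ x y ∩ ((F.erase x).erase y)
            = ((F ∩ orb σ x).erase x).erase y := by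
          rw [← union_inter_distrib_right, sdiff_union_of_subset arc_subset]
          ext z; simp only [mem_inter, mem_erase]; tauto
        rw [this, card_erase_of_mem hy, hSc]; omega
      · rw [disjoint_left]
        intro z hz hz'
        simp only [mem_inter, Finset.mem_sdiff] at hz hz'
        tauto
    omega
  have inj : Set.InjOn (fun y => (arc σ x y ∩ ((F.erase x).erase y)).card) (S : Set V) := by
    intro y hy y' hy' heq
    by_contra hne
    simp only at heq
    have e1 := c1 y hy
    have e2 := c1 y' hy'
    rw [heq, e2] at e1
    obtain ⟨_, a2, a3⟩ := mS y hy
    obtain ⟨_, b2, b3⟩ := mS y' hy'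
    rcases le_total (arcLen σ x y) (arcLen σ x y') with hl | hl
    · obtain ⟨u1, u2⟩ := arc_lt a3 b3 hne hl
      have : (arc σ x y ∩ F).card < (arc σ x y' ∩ F).card := by
        apply card_lt_card
        refine ⟨inter_subset_inter_right u1, fun h => u2 ?_⟩
        exact (mem_inter.1 (h (mem_inter.2 ⟨mem_arc_right b3, b2⟩))).1
      omega
    · obtain ⟨u1, u2⟩ := arc_lt b3 a3 (Ne.symm hne) hl
      have : (arc σ x y' ∩ F).card < (arc σ x y ∩ F).card := by
        apply card_lt_card
        refine ⟨inter_subset_inter_right u1, fun h => u2 ?_⟩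
        exact (mem_inter.1 (h (mem_inter.2 ⟨mem_arc_right a3, a2⟩))).1
      omega
  have img : S.image (fun y => (arc σ x y ∩ ((F.erase x).erase y)).card) =
      Finset.range ((F ∩ orb σ x).card - 1) := by
    apply Finset.eq_of_subset_of_card_le
    · intro j hj
      obtain ⟨y, hy, rfl⟩ := mem_image.1 hj
      rw [mem_range]
      have h1 := c1 y hy
      have h2 : (arc σ x y ∩ F).card ≤ S.card := by
        apply card_le_card
        intro z hz
        rw [mem_inter] at hz
        rw [hS, mem_erase, mem_inter]
        refine ⟨?_, hz.2, arc_subset hz.1⟩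
        rintro rfl
        exact notMem_arc_left (mS y hy).2.2 (Ne.symm (mS y hy).1) hz.1
      omega
    · rw [card_range, card_image_of_injOn inj, hSc]
  rw [← img, sum_image inj]
  refine sum_congr rfl fun y hy => ?_
  rw [c2 y hy]

end Cycles
end PPT

namespace PPT
section Pairings
set_option linter.unusedSectionVars false
open Equiv Equiv.Perm Finset
variable {V : Type*} [Fintype V] [DecidableEq V]

/-- Involutions with support exactly `F`, i.e. pairings of `F`. -/
def PairSet (F : Finset V) : Finset (Perm V) :=
  univ.filter (fun β => β * β = 1 ∧ β.support = F)

lemma mem_PairSet {F : Finset V} {β : Perm V} :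
    β ∈ PairSet F ↔ β * β = 1 ∧ β.support = F := by simp [PairSet]

lemma PairSet_empty : PairSet (∅ : Finset V) = {1} := by
  ext β
  rw [mem_PairSet, mem_singleton, support_eq_empty_iff]
  constructor
  · exact fun h => h.2
  · rintro rfl; simp

lemma pairset_commute {β : Perm V} {x y : V} (h : β * β = 1) (hxy : β x = y) :
    β * swap x y = swap x y * β := by
  have hy : β y = x := by rw [← hxy, ← Perm.mul_apply, h, Perm.one_apply]
  rw [mul_swap_eq_swap_mul, hxy, hy, Equiv.swap_comm]

lemma sum_PairSet {M : Type*} [AddCommMonoid M] (φ : Perm V → M) {F : Finset V} {x : V}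
    (hx : x ∈ F) :
    ∑ β ∈ PairSet F, φ β =
      ∑ y ∈ F.erase x, ∑ β ∈ PairSet ((F.erase x).erase y), φ (β * swap x y) := by
  rw [← Finset.sum_fiberwise_of_maps_to (s := PairSet F) (t := F.erase x) (g := fun β => β x)]
  · refine sum_congr rfl fun y hy => ?_
    rw [mem_erase] at hy
    refine Finset.sum_bij' (fun β _ => β * swap x y) (fun β _ => β * swap x y) ?_ ?_ ?_ ?_ ?_
    · intro β hβ
      rw [mem_filter, mem_PairSet] at hβ
      obtain ⟨⟨h1, h2⟩, h3⟩ := hβ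
      have h4 : β y = x := by rw [← h3, ← Perm.mul_apply, h1, Perm.one_apply]
      rw [mem_PairSet]
      constructor
      · nth_rewrite 1 [pairset_commute h1 h3]
        rw [mul_assoc, ← mul_assoc β, h1, one_mul, Equiv.swap_mul_self]
      · ext z
        rw [mem_erase, mem_erase, ← h2, mem_support, mem_support]
        by_cases hzx : z = x
        · subst hzx; simp [h4]
        by_cases hzy : z = y
        · subst hzy; simp [h3]
        rw [mulswap_apply_of_ne _ hzx hzy]; simp [hzx, hzy]
    · intro β hβ
      rw [mem_PairSet] at hβ
      obtain ⟨h1, h2⟩ := hβ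
      have hx' : β x = x := by rw [← notMem_support, h2]; simp
      have hy' : β y = y := by rw [← notMem_support, h2]; simp
      rw [mem_filter, mem_PairSet]
      refine ⟨⟨?_, ?_⟩, by simp [hy']⟩
      · have : β * swap x y = swap x y * β := by rw [mul_swap_eq_swap_mul, hx', hy']
        nth_rewrite 1 [this]
        rw [mul_assoc, ← mul_assoc β, h1, one_mul, Equiv.swap_mul_self]
      · ext z
        rw [mem_support]
        by_cases hzx : z = x
        · subst hzx; simp [hy', hx, hy.1]
        by_cases hzy : z = y
        · subst hzy; simp [hx', hy.2, Ne.symm hzx]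
        rw [mulswap_apply_of_ne _ hzx hzy, ← mem_support, h2]; simp [hzx, hzy]
    · intro β _; simp [mul_assoc]
    · intro β _; simp [mul_assoc]
    · intro β _; simp [mul_assoc]
  · intro β hβ
    rw [mem_PairSet] at hβ
    rw [mem_erase, ← hβ.2, apply_mem_support, hβ.2]
    refine ⟨?_, hx⟩
    rw [← mem_support, hβ.2]; exact hx

/-- The weighted sum over pairings. -/
noncomputable def tt (N : ℝ) (F : Finset V) (γ l : Perm V) : ℝ :=
  (∑ β ∈ PairSet F, N ^ (cyc (γ⁻¹ * (l * β)) + cyc (γ * (l * β)))) / N ^ (F.card + 2 * cyc γ)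

lemma tt_nonneg {N : ℝ} (hN : 0 < N) (F : Finset V) (γ l : Perm V) : 0 ≤ tt N F γ l := by
  unfold tt; positivity

lemma tt_empty (N : ℝ) (γ l : Perm V) :
    tt N ∅ γ l = N ^ (cyc (γ⁻¹ * l) + cyc (γ * l)) / N ^ (2 * cyc γ) := by
  simp [tt, PairSet_empty]

lemma tt_rec {N : ℝ} (hN : 0 < N) {F : Finset V} {γ l : Perm V} (hl : ∀ z ∈ F, l z = z)
    {x : V} (hx : x ∈ F) :
    tt N F γ l = ∑ y ∈ F.erase x, (if γ.SameCycle x y then 1 else (N ^ 4)⁻¹) *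
      tt N ((F.erase x).erase y) (γ * swap x y) l := by
  unfold tt
  rw [sum_PairSet _ hx, Finset.sum_div]
  refine sum_congr rfl fun y hy => ?_
  have hy' := mem_erase.1 hy
  have e : ∀ β ∈ PairSet ((F.erase x).erase y),
      N ^ (cyc (γ⁻¹ * (l * (β * swap x y))) + cyc (γ * (l * (β * swap x y)))) =
      N ^ (cyc ((γ * swap x y)⁻¹ * (l * β)) + cyc (γ * swap x y * (l * β))) := by
    intro β hβ
    rw [mem_PairSet] at hβ
    have hx' : β x = x := by rw [← notMem_support, hβ.2]; simp
    have hy'' : β y = y := by rw [← notMem_support, hβ.2]; simp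
    have hc : l * β * swap x y = swap x y * (l * β) := by
      rw [mul_swap_eq_swap_mul]; simp [hx', hy'', hl x hx, hl y hy'.2]
    congr 2
    · rw [← mul_assoc l, ← mul_assoc, cyc_mul_comm, _root_.mul_inv_rev, swap_inv, mul_assoc]
    · rw [← mul_assoc l, hc, ← mul_assoc]
  rw [sum_congr rfl e]
  have hc2 : ((F.erase x).erase y).card + 2 = F.card := by
    rw [card_erase_of_mem hy, card_erase_of_mem hx]
    have : ({x, y} : Finset V).card ≤ F.card := by
      apply card_le_card; intro z; simp only [mem_insert, mem_singleton]
      rintro (rfl | rfl); exacts [hx, hy'.2]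
    rw [card_pair hy'.1.symm] at this
    omega
  split_ifs with h
  · rw [one_mul, cyc_split h hy'.1.symm, ← hc2]
    congr 2; ring
  · rw [← cyc_merge γ h, ← hc2]
    field_simp
    ring

end Pairings
end PPT

namespace PPT
section Loop
set_option linter.unusedSectionVars false
open Equiv Equiv.Perm Finset
variable {V : Type*} [Fintype V] [DecidableEq V]

/-- Weight of an element: inverse of the size of its cycle. -/
noncomputable def wt (σ : Perm V) (i : V) : ℝ := ((orb σ i).card : ℝ)⁻¹

lemma wt_nonneg (σ : Perm V) (i : V) : 0 ≤ wt σ i := by unfold wt; positivity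

lemma sum_wt_cycle {σ : Perm V} {C : Finset V} (hC : C ∈ cycs σ) : ∑ i ∈ C, wt σ i = 1 := by
  have : ∀ i ∈ C, wt σ i = (C.card : ℝ)⁻¹ := by
    intro i hi; unfold wt; rw [← cycs_eq_of_mem hC hi]
  rw [sum_congr rfl this, sum_const, nsmul_eq_mul, mul_inv_cancel₀]
  obtain ⟨x, rfl⟩ := mem_cycs.1 hC
  have : 0 < (orb σ x).card := card_pos.2 ⟨x, self_mem_orb _ _⟩
  positivity

lemma sum_wt (σ : Perm V) : ∑ i, wt σ i = cyc σ := by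
  rw [← sum_cycs σ, sum_congr rfl (fun C hC => sum_wt_cycle hC)]
  simp [cyc]

lemma wt_le {σ : Perm V} {i : V} {S : Finset V} (h : S ⊆ orb σ i) (hS : 0 < S.card) :
    wt σ i ≤ (S.card : ℝ)⁻¹ := by
  unfold wt
  apply inv_anti₀
  · exact_mod_cast hS
  · exact_mod_cast card_le_card h

lemma wt_le_one (σ : Perm V) (i : V) : wt σ i ≤ 1 := by
  have := wt_le (σ := σ) (i := i) (S := {i}) (by simpa using self_mem_orb σ i) (by simp)
  simpa using this

lemma wt_le_half {σ : Perm V} {i : V} (h : σ i ≠ i) : wt σ i ≤ 1 / 2 := by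
  have := wt_le (σ := σ) (i := i) (S := {i, σ i}) (by
    intro z; simp only [mem_insert, mem_singleton]
    rintro (rfl | rfl)
    · exact self_mem_orb _ _
    · exact apply_mem_orb (self_mem_orb _ _)) (by rw [card_pair h.symm]; simp)
  rw [card_pair h.symm] at this
  norm_num at this ⊢; exact this

lemma wt_le_third {σ : Perm V} {i a b c : V} (ha : a ∈ orb σ i) (hb : b ∈ orb σ i)
    (hc : c ∈ orb σ i) (hab : a ≠ b) (hac : a ≠ c) (hbc : b ≠ c) : wt σ i ≤ 1 / 3 := by
  have h3 : ({a, b, c} : Finset V).card = 3 := card_eq_three.2 ⟨a, b, c, hab, hac, hbc, rfl⟩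
  have := wt_le (σ := σ) (i := i) (S := {a, b, c}) (by
    intro z; simp only [mem_insert, mem_singleton]
    rintro (rfl | rfl | rfl) <;> assumption) (by rw [h3]; simp)
  rw [h3] at this
  norm_num at this ⊢; exact this

lemma half_le_wt {σ : Perm V} {i : V} (h : σ (σ i) = i) : 1 / 2 ≤ wt σ i := by
  have hs : orb σ i ⊆ {i, σ i} := by
    apply orb_subset _ (by simp)
    intro z; simp only [mem_insert, mem_singleton]
    rintro (rfl | rfl)
    · right; rfl
    · left; exact h
  have h2 : (orb σ i).card ≤ 2 := (card_le_card hs).trans (card_le_two)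
  have h0 : 0 < (orb σ i).card := card_pos.2 ⟨i, self_mem_orb _ _⟩
  unfold wt
  rw [one_div]
  apply inv_anti₀
  · exact_mod_cast h0
  · exact_mod_cast h2

lemma wt_fix {σ : Perm V} {i : V} (h : σ i = i) : wt σ i = 1 := by
  apply le_antisymm (wt_le_one _ _)
  have hs : orb σ i ⊆ {i} := by
    apply orb_subset _ (by simp)
    intro z; simp only [mem_singleton]
    rintro rfl; exact h
  have h2 : (orb σ i).card ≤ 1 := (card_le_card hs)
  have h0 : 0 < (orb σ i).card := card_pos.2 ⟨i, self_mem_orb _ _⟩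
  have : (orb σ i).card = 1 := by omega
  simp [wt, this]

/-- No cycles of length two. -/
def NoTwo (l : Perm V) : Prop := ∀ i, l (l i) = i → l i = i

lemma hh_le (γ l : Perm V) (i : V) :
    wt (γ⁻¹ * l) i + wt (γ * l) i - 2 * wt γ i ≤ 3 / 2 := by
  have h0 := wt_nonneg γ i
  have h1 := wt_le_one (γ⁻¹ * l) i
  have h2 := wt_le_one (γ * l) i
  by_cases hA : (γ⁻¹ * l) i = i
  · by_cases hB : (γ * l) i = i
    · have : γ (γ i) = i := by
        rw [Perm.mul_apply, Perm.inv_eq_iff_eq] at hA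
        rw [Perm.mul_apply, hA] at hB; exact hB
      have := half_le_wt this
      linarith
    · have := wt_le_half hB
      linarith
  · have := wt_le_half hA
    linarith

/-- two consecutive elements of mixed type are impossible -/
lemma typeA_next {γ l : Perm V} (hl : NoTwo l) {i : V} (hi : l i ≠ i)
    (hA : (γ⁻¹ * l) i = i) : (γ * l) (l i) ≠ l i := by
  intro hB
  rw [Perm.mul_apply, Perm.inv_eq_iff_eq] at hA
  rw [Perm.mul_apply] at hB
  have h1 : γ (l (l i)) = γ i := hB.trans hA
  exact hi (hl i (γ.injective h1))

lemma typeB_next {γ l : Perm V} (hl : NoTwo l) {i : V} (hi : l i ≠ i)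
    (hB : (γ * l) i = i) : (γ⁻¹ * l) (l i) ≠ l i := by
  intro hA
  rw [Perm.mul_apply, Perm.inv_eq_iff_eq] at hA
  rw [Perm.mul_apply] at hB
  have h1 : l (l i) = i := hA.trans hB
  exact hi (hl i h1)

/-- The case of a cycle of length 3 with `a`, `b` of the same type. -/
lemma three_aux {σ : Perm V} {i a b : V} (h1 : σ a = i) (h2 : σ i = b) (hia : i ≠ a)
    (hib : i ≠ b) (hab : a ≠ b) :
    wt σ i ≤ 1 / 3 ∧ wt σ a ≤ 1 / 3 ∧ wt σ b ≤ 1 / 3 := by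
  have m1 : i ∈ orb σ a := by rw [← h1]; exact apply_mem_orb (self_mem_orb _ _)
  have m2 : b ∈ orb σ a := by rw [← h2]; exact apply_mem_orb m1
  have m3 := self_mem_orb σ a
  refine ⟨?_, ?_, ?_⟩
  · apply wt_le_third (a := i) (b := a) (c := b) _ _ _ hia hib hab <;>
      rw [orb_eq_of_mem m1] <;> assumption
  · exact wt_le_third m1 m3 m2 hia hib hab
  · apply wt_le_third (a := i) (b := a) (c := b) _ _ _ hia hib hab <;>
      rw [orb_eq_of_mem m2] <;> assumption

lemma cycle_bound {γ l : Perm V} (hl : NoTwo l) {x : V} (hx : l x ≠ x) :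
    ∑ i ∈ orb l x, (wt (γ⁻¹ * l) i + wt (γ * l) i - 2 * wt γ i) ≤
      ∑ i ∈ orb l x, (2 - 2 * wt l i - 1 / 10) := by
  set C := orb l x with hC
  have hCl : ∀ i ∈ C, l i ∈ C := fun i hi => apply_mem_orb hi
  have hne : ∀ i ∈ C, l i ≠ i := by
    intro i hi h
    exact hx (((mem_orb.1 hi).apply_eq_self_iff).2 h)
  have rhs : ∑ i ∈ C, (2 - 2 * wt l i - 1 / 10) = 19 / 10 * (C.card : ℝ) - 2 := by
    have e : ∀ i ∈ C, (2 - 2 * wt l i - 1 / 10) = 19 / 10 - 2 * wt l i := by intros; ring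
    rw [sum_congr rfl e, sum_sub_distrib, ← mul_sum, sum_wt_cycle (orb_mem_cycs l x), sum_const,
      nsmul_eq_mul]; ring
  have h3 : 3 ≤ C.card := by
    have : ({x, l x, l (l x)} : Finset V).card = 3 :=
      card_eq_three.2 ⟨x, l x, l (l x), hx.symm, fun h => hx (hl x h.symm),
        fun h => hx (l.injective h.symm), rfl⟩
    rw [← this]
    apply card_le_card
    have m := self_mem_orb l x
    intro z; simp only [mem_insert, mem_singleton]
    rintro (rfl | rfl | rfl)
    · exact m
    · exact hCl _ m
    · exact hCl _ (hCl _ m)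
  have h3' : (3 : ℝ) ≤ C.card := by exact_mod_cast h3
  rw [rhs]
  have n1 := wt_le_one (γ⁻¹ * l)
  have n2 := wt_le_one (γ * l)
  have n0 := wt_nonneg γ
  by_cases hall : ∀ i ∈ C, (γ⁻¹ * l) i = i ∨ (γ * l) i = i
  · have hw : ∀ i ∈ C, wt (γ⁻¹ * l) i + wt (γ * l) i ≤ 3 / 2 := by
      intro i hi
      by_cases hA : (γ⁻¹ * l) i = i
      · by_cases hB : (γ * l) i = i
        · rcases hall (l i) (hCl i hi) with h | h
          · exact absurd h (typeB_next hl (hne i hi) hB)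
          · exact absurd h (typeA_next hl (hne i hi) hA)
        · have := wt_le_half hB
          linarith [n1 i]
      · have := wt_le_half hA
        linarith [n2 i]
    have hsub : orb γ x ⊆ C := by
      rcases hall x (self_mem_orb _ _) with hA | hB
      · have all : C ⊆ C.filter (fun i => (γ⁻¹ * l) i = i) := by
          apply orb_subset
          · intro z hz
            rw [mem_filter] at hz ⊢
            exact ⟨hCl _ hz.1, (hall _ (hCl _ hz.1)).resolve_right
              (typeA_next hl (hne _ hz.1) hz.2)⟩
          · exact mem_filter.2 ⟨self_mem_orb _ _, hA⟩
        apply orb_subset _ (self_mem_orb _ _)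
        intro z hz
        have := (mem_filter.1 (all hz)).2
        rw [Perm.mul_apply, Perm.inv_eq_iff_eq] at this
        rw [← this]; exact hCl z hz
      · have all : C ⊆ C.filter (fun i => (γ * l) i = i) := by
          apply orb_subset
          · intro z hz
            rw [mem_filter] at hz ⊢
            exact ⟨hCl _ hz.1, (hall _ (hCl _ hz.1)).resolve_left
              (typeB_next hl (hne _ hz.1) hz.2)⟩
          · exact mem_filter.2 ⟨self_mem_orb _ _, hB⟩
        rw [← orb_inv]
        apply orb_subset _ (self_mem_orb _ _)
        intro z hz
        have := (mem_filter.1 (all hz)).2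
        rw [Perm.mul_apply] at this
        have h4 : γ⁻¹ z = l z := by rw [Perm.inv_eq_iff_eq]; exact this.symm
        rw [h4]; exact hCl z hz
    have hw0 : 1 ≤ ∑ i ∈ C, wt γ i := by
      rw [← sum_wt_cycle (orb_mem_cycs γ x)]
      exact sum_le_sum_of_subset_of_nonneg hsub (fun i _ _ => n0 i)
    have := sum_le_sum hw
    rw [sum_const, nsmul_eq_mul] at this
    rw [sum_sub_distrib, ← mul_sum]
    linarith
  · push Not at hall
    obtain ⟨i0, hi0, hA0, hB0⟩ := hall
    have one : ∀ i, (γ⁻¹ * l) i ≠ i → (γ * l) i ≠ i →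
        wt (γ⁻¹ * l) i + wt (γ * l) i - 2 * wt γ i ≤ 1 := by
      intro i hA hB
      have := wt_le_half hA
      have := wt_le_half hB
      linarith [n0 i]
    have b0 := one i0 hA0 hB0
    rcases h3.eq_or_lt with h | h
    · set a := l i0 with ha
      set b := l a with hb
      have hia : i0 ≠ a := (hne _ hi0).symm
      have hib : i0 ≠ b := fun h => hne _ hi0 (hl i0 h.symm)
      have hab : a ≠ b := fun h => hne _ hi0 (l.injective h.symm)
      have haC : a ∈ C := hCl _ hi0
      have hbC : b ∈ C := hCl _ haC
      have hCe : C = {i0, a, b} := by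
        symm
        apply eq_of_subset_of_card_le
        · intro z; simp only [mem_insert, mem_singleton]
          rintro (rfl | rfl | rfl) <;> assumption
        · rw [← h, card_eq_three.2 ⟨i0, a, b, hia, hib, hab, rfl⟩]
      have hlb : l b = i0 := by
        have := hCl _ hbC
        rw [hCe] at this
        simp only [mem_insert, mem_singleton] at this
        rcases this with h | h | h
        · exact h
        · exact absurd (l.injective h) (Ne.symm hib)
        · exact absurd (l.injective h) (Ne.symm hab)
      rw [← h]
      rw [hCe, sum_insert (by simp [hia, hib]), sum_insert (by simp [hab]), sum_singleton]
      have ga := hh_le γ l a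
      have gb := hh_le γ l b
      by_cases h1 : (γ⁻¹ * l) a ≠ a ∧ (γ * l) a ≠ a
      · have := one a h1.1 h1.2
        push_cast; linarith
      by_cases h2 : (γ⁻¹ * l) b ≠ b ∧ (γ * l) b ≠ b
      · have := one b h2.1 h2.2
        push_cast; linarith
      have hi0A := wt_le_half hA0
      have hi0B := wt_le_half hB0
      by_cases hA : (γ⁻¹ * l) a = a
      · have hbA : (γ⁻¹ * l) b = b := by
          by_contra h5
          exact h2 ⟨h5, typeA_next hl (hne _ haC) hA⟩
        rw [Perm.mul_apply, Perm.inv_eq_iff_eq] at hA hbA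
        have := three_aux (σ := γ * l) (i := i0) (a := a) (b := b)
          (by rw [Perm.mul_apply, ← hb, ← hbA, hlb])
          (by rw [Perm.mul_apply, ← ha, ← hA]) hia hib hab
        push_cast
        linarith [n0 i0, n0 a, n0 b, n1 i0, n1 a, n1 b]
      · have hB : (γ * l) a = a := by
          by_contra h5
          exact h1 ⟨hA, h5⟩
        have hbB : (γ * l) b = b := by
          by_contra h5
          exact h2 ⟨typeB_next hl (hne _ haC) hB, h5⟩
        rw [Perm.mul_apply] at hB hbB
        have := three_aux (σ := γ⁻¹ * l) (i := i0) (a := a) (b := b)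
          (by rw [Perm.mul_apply, Perm.inv_eq_iff_eq, ← hb, ← hbB, hlb])
          (by rw [Perm.mul_apply, Perm.inv_eq_iff_eq, ← ha, ← hB]) hia hib hab
        push_cast
        linarith [n0 i0, n0 a, n0 b, n2 i0, n2 a, n2 b]
    · have h4 : (4 : ℝ) ≤ C.card := by exact_mod_cast h
      rw [← Finset.add_sum_erase _ _ hi0]
      have := sum_le_sum (s := C.erase i0) (fun i _ => hh_le γ l i)
      rw [sum_const, nsmul_eq_mul, card_erase_of_mem hi0, Nat.cast_sub (by omega)] at this
      push_cast at this
      linarith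

lemma loop_base {γ l : Perm V} (hl : NoTwo l) (h : ∀ d, l d = d → γ d = d) :
    10 * (cyc (γ⁻¹ * l) + cyc (γ * l)) + l.support.card + 20 * cyc l ≤
      20 * cyc γ + 20 * Fintype.card V := by
  have key : ∑ i, (wt (γ⁻¹ * l) i + wt (γ * l) i - 2 * wt γ i) ≤
      ∑ i, (2 - 2 * wt l i - if i ∈ l.support then 1 / 10 else 0) := by
    rw [← sum_cycs l, ← sum_cycs l]
    apply sum_le_sum
    intro C hC
    obtain ⟨x, rfl⟩ := mem_cycs.1 hC
    by_cases hx : l x = x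
    · have : orb l x = {x} := by
        apply Finset.Subset.antisymm
        · apply orb_subset _ (by simp)
          intro z; simp only [mem_singleton]
          rintro rfl; exact hx
        · simpa using self_mem_orb l x
      rw [this, sum_singleton, sum_singleton]
      have g := h x hx
      have gi : γ⁻¹ x = x := by rw [Perm.inv_eq_iff_eq, g]
      rw [wt_fix hx, wt_fix g, wt_fix (by rw [Perm.mul_apply, hx, gi]), wt_fix (by rw [Perm.mul_apply, hx, g])]
      rw [if_neg (by simpa using hx)]; norm_num
    · refine (cycle_bound hl hx).trans (sum_le_sum fun i hi => ?_)
      rw [if_pos]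
      rw [mem_support]
      intro h'
      exact hx (((mem_orb.1 hi).apply_eq_self_iff).2 h')
  rw [sum_sub_distrib, sum_add_distrib, ← mul_sum, sum_sub_distrib, sum_sub_distrib, ← mul_sum,
    sum_wt, sum_wt, sum_wt, sum_wt, sum_ite_mem, univ_inter, sum_const, sum_const, nsmul_eq_mul,
    nsmul_eq_mul, card_univ] at key
  have : (10 * (cyc (γ⁻¹ * l) + cyc (γ * l)) + l.support.card + 20 * cyc l : ℝ) ≤
      20 * cyc γ + 20 * Fintype.card V := by linarith
  exact_mod_cast this

lemma cyc_le_card (σ : Perm V) : cyc σ ≤ Fintype.card V := by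
  unfold cyc cycs
  exact card_image_le

lemma loop_bound {l : Perm V} (hl : NoTwo l) (γ : Perm V) :
    10 * (cyc (γ⁻¹ * l) + cyc (γ * l)) + l.support.card + 20 * cyc l ≤
      20 * cyc γ + 20 * Fintype.card V := by
  induction hk : Fintype.card V - cyc γ using Nat.strong_induction_on generalizing γ with
  | _ k ih =>
  by_cases h : ∀ d, l d = d → γ d = d
  · exact loop_base hl h
  · push Not at h
    obtain ⟨d, hd, hγ⟩ := h
    set e := γ⁻¹ d with he
    have hed : γ e = d := by simp [he]
    have hde : d ≠ e := by
      intro h'; rw [← h'] at hed; exact hγ hed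
    have hs : γ.SameCycle d e := by
      rw [← orb_eq_iff]; symm
      rw [orb_eq_iff, ← hed]; exact sameCycle_apply_right.2 (SameCycle.refl _ _)
    have c0 := cyc_split hs hde
    have hinv : l⁻¹ d = d := by rw [Perm.inv_eq_iff_eq, hd]
    have c2 : cyc (γ * swap d e * l) = cyc (γ * l) + 1 := by
      have e1 : γ * swap d e * l = γ * l * swap d (l⁻¹ e) := by
        have := Equiv.mul_swap_eq_swap_mul l d (l⁻¹ e)
        rw [hd, show l (l⁻¹ e) = e from l.apply_symm_apply e] at this
        rw [mul_assoc, ← this, mul_assoc]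
      rw [e1]
      apply cyc_split
      · rw [sameCycle_comm]
        have : (γ * l) (l⁻¹ e) = d := by simp [hed]
        have h2 : (γ * l).SameCycle (l⁻¹ e) ((γ * l) (l⁻¹ e)) :=
          sameCycle_apply_right.2 (SameCycle.refl _ _)
        rwa [this] at h2
      · intro h'
        have := congrArg l h'
        rw [hd, show l (l⁻¹ e) = e from l.apply_symm_apply e] at this
        exact hde this
    have c1 : cyc ((γ * swap d e)⁻¹ * l) = cyc (γ⁻¹ * l) + 1 := by
      rw [_root_.mul_inv_rev, swap_inv, mul_assoc, cyc_mul_comm]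
      apply cyc_split _ hde
      have : (γ⁻¹ * l) d = e := by simp [hd, he]
      have h2 : (γ⁻¹ * l).SameCycle d ((γ⁻¹ * l) d) :=
          sameCycle_apply_right.2 (SameCycle.refl _ _)
      rwa [this] at h2
    have hle := cyc_le_card (γ * swap d e)
    have := ih (Fintype.card V - cyc (γ * swap d e)) (by omega) _ rfl
    omega

end Loop
end PPT

namespace PPT
section HSeq
open Finset

/-- Perturbed aerated Catalan numbers. -/
noncomputable def hseq (ε : ℝ) : ℕ → ℝ
  | 0 => 1
  | 1 => ε
  | q + 2 => ∑ j : Fin (q + 1), hseq ε (q - j) * hseq ε j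
decreasing_by all_goals omega

lemma hseq_zero (ε : ℝ) : hseq ε 0 = 1 := by rw [hseq]
lemma hseq_one (ε : ℝ) : hseq ε 1 = ε := by rw [hseq]
lemma hseq_add_two (ε : ℝ) (q : ℕ) :
    hseq ε (q + 2) = ∑ j ∈ range (q + 1), hseq ε (q - j) * hseq ε j := by
  rw [hseq, Finset.sum_range (fun j => hseq ε (q - j) * hseq ε j)]

lemma hseq_rec (ε : ℝ) {q : ℕ} (hq : 2 ≤ q) :
    ∑ j ∈ range (q - 1), hseq ε (q - 2 - j) * hseq ε j = hseq ε q := by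
  obtain ⟨q, rfl⟩ := Nat.exists_eq_add_of_le' hq
  rw [hseq_add_two]; rfl

lemma hseq_nonneg {ε : ℝ} (hε : 0 ≤ ε) (q : ℕ) : 0 ≤ hseq ε q := by
  induction q using Nat.strong_induction_on with
  | _ q ih =>
  rcases q with _ | _ | q
  · rw [hseq_zero]; norm_num
  · rw [zero_add, hseq_one]; exact hε
  · rw [hseq_add_two]
    apply sum_nonneg
    intro j hj
    rw [mem_range] at hj
    exact mul_nonneg (ih _ (by omega)) (ih _ (by omega))

lemma sum_range_even_odd {M : Type*} [AddCommMonoid M] (f : ℕ → M) (r : ℕ) :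
    ∑ j ∈ range (2 * r + 1), f j =
      ∑ i ∈ range (r + 1), f (2 * i) + ∑ i ∈ range r, f (2 * i + 1) := by
  induction r with
  | zero => simp
  | succ r ih =>
    rw [show 2 * (r + 1) + 1 = (2 * r + 1) + 1 + 1 by ring, sum_range_succ, sum_range_succ, ih,
      sum_range_succ (fun i => f (2 * i)) (r + 1), sum_range_succ (fun i => f (2 * i + 1)) r,
      show 2 * (r + 1) = 2 * r + 1 + 1 by ring]
    abel

lemma catalan_succ_range (q : ℕ) :
    (catalan (q + 1) : ℝ) = ∑ i ∈ range (q + 1), (catalan i : ℝ) * catalan (q - i) := by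
  rw [catalan_succ, Finset.sum_range (fun i => (catalan i : ℝ) * catalan (q - i))]
  push_cast; rfl

lemma catalan_le_hseq {ε : ℝ} (hε : 0 ≤ ε) (q : ℕ) : (catalan q : ℝ) ≤ hseq ε (2 * q) := by
  induction q using Nat.strong_induction_on with
  | _ q ih =>
  rcases q with _ | q
  · simp [hseq_zero]
  · rw [catalan_succ_range, show 2 * (q + 1) = 2 * q + 2 by ring, hseq_add_two, sum_range_even_odd]
    have : 0 ≤ ∑ i ∈ range q, hseq ε (2 * q - (2 * i + 1)) * hseq ε (2 * i + 1) :=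
      sum_nonneg fun i _ => mul_nonneg (hseq_nonneg hε _) (hseq_nonneg hε _)
    refine le_trans ?_ (le_add_of_nonneg_right this)
    apply sum_le_sum
    intro i hi
    rw [mem_range] at hi
    rw [mul_comm, ← Nat.mul_sub]
    exact mul_le_mul (ih _ (by omega)) (ih _ (by omega)) (by positivity) (hseq_nonneg hε _)

lemma cat_eq (q : ℕ) : hseq 0 (2 * q) = catalan q ∧ hseq 0 (2 * q + 1) = 0 := by
  induction q using Nat.strong_induction_on with
  | _ q ih =>
  rcases q with _ | q
  · simp [hseq_zero, hseq_one]
  · constructor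
    · rw [catalan_succ_range, show 2 * (q + 1) = 2 * q + 2 by ring, hseq_add_two,
        sum_range_even_odd]
      have : ∑ i ∈ range q, hseq 0 (2 * q - (2 * i + 1)) * hseq 0 (2 * i + 1) = 0 := by
        apply sum_eq_zero
        intro i hi
        rw [mem_range] at hi
        rw [(ih i (by omega)).2, mul_zero]
      rw [this, add_zero]
      apply sum_congr rfl
      intro i hi
      rw [mem_range] at hi
      rw [← Nat.mul_sub, (ih _ (by omega)).1, (ih _ (by omega)).1, mul_comm]
    · rw [show 2 * (q + 1) + 1 = 2 * q + 1 + 2 by ring, hseq_add_two]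
      apply sum_eq_zero
      intro i hi
      rw [mem_range] at hi
      rcases Nat.even_or_odd' i with ⟨k, rfl | rfl⟩
      · rw [show 2 * q + 1 - 2 * k = 2 * (q - k) + 1 by omega, (ih _ (by omega)).2, zero_mul]
      · rw [(ih _ (by omega)).2, mul_zero]

lemma hseq_sum_le {ε : ℝ} (hε : 0 ≤ ε) (hε1 : ε ≤ 1) (n : ℕ) :
    ∑ q ∈ range (n + 2), hseq ε q * ((1 - ε) / 2) ^ q ≤ 2 := by
  set z := (1 - ε) / 2 with hz
  have hz0 : 0 ≤ z := by rw [hz]; linarith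
  have nn : ∀ q, 0 ≤ hseq ε q * z ^ q := fun q => mul_nonneg (hseq_nonneg hε q) (by positivity)
  induction n with
  | zero =>
    rw [sum_range_succ, sum_range_succ]
    simp only [range_zero, sum_empty, hseq_zero, hseq_one]
    rw [hz]; nlinarith
  | succ n ih =>
    have e : ∀ q, hseq ε (q + 2) * z ^ (q + 2) =
        z ^ 2 * ∑ j ∈ range (q + 1), (hseq ε j * z ^ j) * (hseq ε (q - j) * z ^ (q - j)) := by
      intro q
      rw [hseq_add_two, sum_mul, mul_sum]
      apply sum_congr rfl
      intro j hj
      rw [mem_range] at hj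
      have : z ^ (q + 2) = z ^ 2 * (z ^ j * z ^ (q - j)) := by
        rw [← pow_add, ← pow_add]; congr 1; omega
      rw [this]; ring
    have hc : ∑ q ∈ range (n + 1), ∑ j ∈ range (q + 1),
        (hseq ε j * z ^ j) * (hseq ε (q - j) * z ^ (q - j)) ≤ 2 * 2 := by
      rw [Finset.sum_range_diag_flip (n + 1) (fun a b => (hseq ε a * z ^ a) * (hseq ε b * z ^ b))]
      have sub : ∀ k, k ≤ n + 2 → ∑ q ∈ range k, hseq ε q * z ^ q ≤ 2 := by
        intro k hk
        exact (sum_le_sum_of_subset_of_nonneg (range_mono hk) (fun i _ _ => nn i)).trans ih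
      calc _ ≤ ∑ m ∈ range (n + 1), (hseq ε m * z ^ m) * 2 := by
            apply sum_le_sum
            intro m hm
            rw [← mul_sum]
            exact mul_le_mul_of_nonneg_left (sub _ (by omega)) (nn m)
        _ = (∑ m ∈ range (n + 1), (hseq ε m * z ^ m)) * 2 := by rw [sum_mul]
        _ ≤ 2 * 2 := by
            have := sub (n + 1) (by omega)
            linarith
    rw [show n + 1 + 2 = (n + 1) + 1 + 1 by ring, sum_range_succ', sum_range_succ']
    rw [sum_congr rfl (fun q _ => e q), ← mul_sum]
    simp only [hseq_zero, hseq_one, zero_add, pow_one, pow_zero]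
    have : z ^ 2 * (∑ q ∈ range (n + 1), ∑ j ∈ range (q + 1),
        (hseq ε j * z ^ j) * (hseq ε (q - j) * z ^ (q - j))) ≤ z ^ 2 * (2 * 2) :=
      mul_le_mul_of_nonneg_left hc (by positivity)
    have h3 : z ^ 2 * (2 * 2) + ε * z + 1 * 1 ≤ 2 := by rw [hz]; nlinarith
    linarith

lemma hseq_le {ε : ℝ} (hε : 0 ≤ ε) (hε1 : ε < 1) (q : ℕ) :
    hseq ε q ≤ 2 * (2 / (1 - ε)) ^ q := by
  have h := hseq_sum_le hε hε1.le q
  have h1 : (0 : ℝ) < 1 - ε := by linarith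
  have h2 : hseq ε q * ((1 - ε) / 2) ^ q ≤ 2 :=
    (single_le_sum (f := fun q => hseq ε q * ((1 - ε) / 2) ^ q)
      (fun i _ => mul_nonneg (hseq_nonneg hε i) (by positivity))
      (mem_range.2 (show q < q + 2 by omega))).trans h
  have h3 : (2 / (1 - ε)) ^ q = (((1 - ε) / 2) ^ q)⁻¹ := by rw [← inv_pow, inv_div]
  rw [h3, ← div_eq_mul_inv, le_div_iff₀ (by positivity)]
  exact h2

lemma catalan_lower (q : ℕ) : (4 : ℝ) ^ q ≤ 2 * (q + 1) ^ 2 * catalan q := by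
  rcases Nat.eq_zero_or_pos q with rfl | hq
  · simp
  have h := Nat.four_pow_le_two_mul_self_mul_centralBinom q hq
  rw [← succ_mul_catalan_eq_centralBinom] at h
  have h' : (4 : ℝ) ^ q ≤ 2 * q * ((q + 1) * catalan q) := by exact_mod_cast h
  refine h'.trans ?_
  have : (0 : ℝ) ≤ (q + 1) * catalan q := by positivity
  nlinarith

lemma hseq_lower {ε : ℝ} (hε : 0 ≤ ε) (hε1 : ε ≤ 1) (a : ℕ) :
    ε * 2 ^ a ≤ 16 * (a + 1) ^ 2 * hseq ε a := by
  have ev : ∀ q : ℕ, (2 : ℝ) ^ (2 * q) ≤ 2 * (2 * q + 1) ^ 2 * hseq ε (2 * q) := by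
    intro q
    rw [pow_mul]; norm_num
    have h1 := catalan_lower q
    have h2 := catalan_le_hseq hε q
    calc (4 : ℝ) ^ q ≤ 2 * (q + 1) ^ 2 * catalan q := h1
      _ ≤ 2 * (2 * q + 1) ^ 2 * hseq ε (2 * q) := by gcongr; linarith [(Nat.cast_nonneg q : (0:ℝ) ≤ q)]
  rcases Nat.even_or_odd' a with ⟨q, rfl | rfl⟩
  · have := ev q
    have h3 := hseq_nonneg hε (2 * q)
    have h2 : (0 : ℝ) ≤ 2 ^ (2 * q) := by positivity
    push_cast
    have h4 : 0 ≤ (2 * (q : ℝ) + 1) ^ 2 * hseq ε (2 * q) := by positivity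
    nlinarith
  · rcases q with _ | q
    · simp [hseq_one]; linarith
    · have h1 : ε * hseq ε (2 * q) ≤ hseq ε (2 * (q + 1) + 1) := by
        rw [show 2 * (q + 1) + 1 = 2 * q + 1 + 2 by ring, hseq_add_two]
        have := single_le_sum (f := fun j => hseq ε (2 * q + 1 - j) * hseq ε j)
          (s := range (2 * q + 1 + 1))
          (fun i _ => mul_nonneg (hseq_nonneg hε _) (hseq_nonneg hε _))
          (mem_range.2 (show 2 * q < 2 * q + 1 + 1 by omega))
        simp only [Nat.add_sub_cancel_left, hseq_one] at this
        exact this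
      have h2 := ev q
      push_cast
      rw [show 2 * (q + 1) + 1 = 2 * q + 3 by ring, pow_add]
      rw [show 2 * (q + 1) + 1 = 2 * q + 3 by ring] at h1
      calc ε * (2 ^ (2 * q) * 2 ^ 3) ≤ ε * ((2 * (2 * q + 1) ^ 2 * hseq ε (2 * q)) * 2 ^ 3) := by
            gcongr
        _ = 16 * (2 * q + 1) ^ 2 * (ε * hseq ε (2 * q)) := by ring
        _ ≤ 16 * (2 * (q + 1) + 1 + 1) ^ 2 * hseq ε (2 * q + 3) := by
            have := hseq_nonneg hε (2 * q)
            gcongr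
            linarith

lemma hseq_pos {ε : ℝ} (hε : 0 < ε) (hε1 : ε ≤ 1) (a : ℕ) : 0 < hseq ε a := by
  have := hseq_lower hε.le hε1 a
  have h2 : 0 < ε * 2 ^ a := by positivity
  by_contra h
  have h3 : hseq ε a = 0 := le_antisymm (not_lt.1 h) (hseq_nonneg hε.le a)
  rw [h3] at this; linarith
end HSeq
end PPT

namespace PPT
section Induct
set_option linter.unusedSectionVars false
open Equiv Equiv.Perm Finset
variable {V : Type*} [Fintype V] [DecidableEq V]

lemma prod_merge' {M : Type*} [CommMonoid M] (g : Finset V → M) (σ : Perm V) {x y : V}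
    (h : ¬ σ.SameCycle x y) :
    (∏ C ∈ cycs (σ * swap x y), g C) =
      g (orb σ x ∪ orb σ y) * ∏ C ∈ ((cycs σ).erase (orb σ x)).erase (orb σ y), g C := by
  rw [cycs_merge σ h, prod_insert (merge_notMem σ)]

lemma prod_split' {M : Type*} [CommMonoid M] (g : Finset V → M) {σ : Perm V} {x y : V}
    (h : σ.SameCycle x y) (hxy : x ≠ y) :
    (∏ C ∈ cycs (σ * swap x y), g C) =
      (∏ C ∈ (cycs σ).erase (orb σ x), g C) * (g (orb σ x \ arc σ x y) * g (arc σ x y)) := by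
  have hn := not_sameCycle_split h hxy
  have e := cycs_merge (σ * swap x y) hn
  have hm := merge_notMem (σ * swap x y) (x := x) (y := y)
  rw [mul_assoc, Equiv.swap_mul_self, mul_one] at e
  have hu : orb (σ * swap x y) x ∪ orb (σ * swap x y) y = orb σ x := by
    rw [orb_split_left h hxy, orb_split_right h hxy, sdiff_union_of_subset arc_subset]
  rw [hu] at e hm
  have e2 : (cycs σ).erase (orb σ x) =
      ((cycs (σ * swap x y)).erase (orb (σ * swap x y) x)).erase (orb (σ * swap x y) y) := by
    rw [e, erase_insert hm]
  rw [e2, ← orb_split_left h hxy, ← orb_split_right h hxy,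
    ← Finset.mul_prod_erase (cycs (σ * swap x y)) g (orb_mem_cycs (σ * swap x y) x),
    ← Finset.mul_prod_erase ((cycs (σ * swap x y)).erase (orb (σ * swap x y) x)) g
      (a := orb (σ * swap x y) y)]
  · rw [← mul_assoc, mul_comm]
  · rw [mem_erase]; exact ⟨fun h' => hn (orb_eq_iff.1 h'.symm), orb_mem_cycs _ _⟩

lemma inter_erase_other {γ : Perm V} {F C : Finset V} {x : V} (hC : C ∈ cycs γ)
    (hCx : C ≠ orb γ x) : C ∩ F.erase x = C ∩ F := by
  ext z
  simp only [mem_inter, mem_erase]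
  constructor
  · tauto
  · rintro ⟨h1, h2⟩
    refine ⟨h1, ?_, h2⟩
    rintro rfl
    exact hCx (cycs_eq_of_mem hC h1)

/-- the product `∏_C f(|C ∩ F|)` for the permutation after a split -/
lemma prodf_split (f : ℕ → ℝ) {γ : Perm V} (F : Finset V) {x y : V} (h : γ.SameCycle x y)
    (hxy : x ≠ y) :
    ∏ C ∈ cycs (γ * swap x y), f ((C ∩ (F.erase x).erase y).card) =
      (∏ C ∈ (cycs γ).erase (orb γ x), f ((C ∩ F).card)) *
        (f (((orb γ x \ arc γ x y) ∩ (F.erase x).erase y).card) *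
          f ((arc γ x y ∩ (F.erase x).erase y).card)) := by
  rw [prod_split' (fun C => f ((C ∩ (F.erase x).erase y).card)) h hxy]
  congr 1
  apply prod_congr rfl
  intro C hC
  rw [mem_erase] at hC
  rw [inter_erase_other hC.2 (by rw [← orb_eq_iff.2 h]; exact hC.1), inter_erase_other hC.2 hC.1]

lemma prodf_merge (f : ℕ → ℝ) {γ : Perm V} {F : Finset V} {x y : V} (h : ¬ γ.SameCycle x y)
    (hx : x ∈ F) (hy : y ∈ F) :
    ∏ C ∈ cycs (γ * swap x y), f ((C ∩ (F.erase x).erase y).card) =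
      f ((F ∩ orb γ x).card + (F ∩ orb γ y).card - 2) *
      ∏ C ∈ ((cycs γ).erase (orb γ x)).erase (orb γ y), f ((C ∩ F).card) := by
  rw [prod_merge' (fun C => f ((C ∩ (F.erase x).erase y).card)) γ h]
  have hxy : x ≠ y := by rintro rfl; exact h (SameCycle.refl _ _)
  congr 1
  · congr 1
    have e : (orb γ x ∪ orb γ y) ∩ (F.erase x).erase y =
        ((F ∩ orb γ x ∪ F ∩ orb γ y).erase x).erase y := by
      ext z; simp only [mem_inter, mem_union, mem_erase]; tauto
    rw [e, card_erase_of_mem, card_erase_of_mem, card_union_of_disjoint]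
    · omega
    · rw [disjoint_left]
      intro z hz hz'
      simp only [mem_inter, mem_orb] at hz hz'
      exact h (hz.2.trans hz'.2.symm)
    · simp [hx, self_mem_orb]
    · simp [hy, self_mem_orb, hxy.symm]
  · apply prod_congr rfl
    intro C hC
    rw [mem_erase, mem_erase] at hC
    rw [inter_erase_other hC.2.2 hC.1, inter_erase_other hC.2.2 hC.2.1]

lemma card_erase_lt {F : Finset V} {x y : V} (hx : x ∈ F) :
    ((F.erase x).erase y).card < F.card :=
  lt_of_le_of_lt (card_le_card (erase_subset _ _)) (card_erase_lt_of_mem hx)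

theorem tt_upper {N : ℝ} (hN : 0 < N) {l : Perm V} {b B : ℝ} {f : ℕ → ℝ} (hb : 0 ≤ b) (hB : 0 ≤ B)
    (hf0 : f 0 = 1) (hf : ∀ q, 0 ≤ f q)
    (base : ∀ γ : Perm V, tt N ∅ γ l ≤ b)
    (H1 : ∀ q, 1 ≤ q → q ≤ Fintype.card V →
      ∑ j ∈ range (q - 1), f (q - 2 - j) * f j +
        (Fintype.card V) * ((N ^ 4)⁻¹ * (B * f q)) ≤ f q)
    (H2 : ∀ u v, 1 ≤ u → 1 ≤ v → u + v ≤ Fintype.card V → f (u + v - 2) ≤ B * f u * f v)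
    (F : Finset V) (hl : ∀ z ∈ F, l z = z) (γ : Perm V) :
    tt N F γ l ≤ b * ∏ C ∈ cycs γ, f ((C ∩ F).card) := by
  induction hk : F.card using Nat.strong_induction_on generalizing F γ with
  | _ k ih =>
  rcases F.eq_empty_or_nonempty with rfl | ⟨x, hx⟩
  · simpa [hf0] using base γ
  · rw [tt_rec hN hl hx]
    set q := (F ∩ orb γ x).card with hq
    have hq1 : 1 ≤ q := card_pos.2 ⟨x, mem_inter.2 ⟨hx, self_mem_orb _ _⟩⟩
    have hqp : q ≤ Fintype.card V := card_le_univ _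
    set R := ∏ C ∈ (cycs γ).erase (orb γ x), f ((C ∩ F).card) with hR
    have hR0 : 0 ≤ R := prod_nonneg fun _ _ => hf _
    have total : ∏ C ∈ cycs γ, f ((C ∩ F).card) = f q * R := by
      rw [← Finset.mul_prod_erase (cycs γ) _ (orb_mem_cycs γ x), inter_comm]
    have IH : ∀ y ∈ F.erase x, tt N ((F.erase x).erase y) (γ * swap x y) l ≤
        b * ∏ C ∈ cycs (γ * swap x y), f ((C ∩ (F.erase x).erase y).card) := by
      intro y _
      exact ih _ (by rw [← hk]; exact card_erase_lt hx) _
        (fun z hz => hl z (mem_of_mem_erase (mem_of_mem_erase hz))) _ rfl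
    have bound : ∀ y ∈ F.erase x, (if γ.SameCycle x y then 1 else (N ^ 4)⁻¹) *
        tt N ((F.erase x).erase y) (γ * swap x y) l ≤
        (if γ.SameCycle x y then b * R * (f (((orb γ x \ arc γ x y) ∩ (F.erase x).erase y).card) *
          f ((arc γ x y ∩ (F.erase x).erase y).card)) else
          b * R * ((N ^ 4)⁻¹ * (B * f q))) := by
      intro y hy
      have hy' := mem_erase.1 hy
      have := IH y hy
      split_ifs with h
      · rw [prodf_split f F h hy'.1.symm] at this
        rw [one_mul]; refine this.trans (le_of_eq (by ring))
      · rw [prodf_merge f h hx hy'.2] at this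
        rw [mul_comm (b * R), mul_assoc]
        apply mul_le_mul_of_nonneg_left _ (by positivity)
        refine this.trans ?_
        set R' := ∏ C ∈ ((cycs γ).erase (orb γ x)).erase (orb γ y), f ((C ∩ F).card) with hR'
        have hR'0 : 0 ≤ R' := prod_nonneg fun _ _ => hf _
        have hRR : R = f ((F ∩ orb γ y).card) * R' := by
          rw [hR, ← Finset.mul_prod_erase ((cycs γ).erase (orb γ x)) _ (a := orb γ y), inter_comm]
          rw [mem_erase]; exact ⟨fun h' => h (orb_eq_iff.1 h'.symm), orb_mem_cycs _ _⟩
        have hv1 : 1 ≤ (F ∩ orb γ y).card := card_pos.2 ⟨y, mem_inter.2 ⟨hy'.2, self_mem_orb _ _⟩⟩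
        have huv : q + (F ∩ orb γ y).card ≤ Fintype.card V := by
          rw [hq, ← card_union_of_disjoint]
          · exact card_le_univ _
          · rw [disjoint_left]
            intro z hz hz'
            simp only [mem_inter, mem_orb] at hz hz'
            exact h (hz.2.trans hz'.2.symm)
        have h2 := H2 _ _ hq1 hv1 huv
        calc b * (f (q + (F ∩ orb γ y).card - 2) * R')
            ≤ b * ((B * f q * f ((F ∩ orb γ y).card)) * R') := by gcongr
          _ = B * f q * (b * R) := by rw [hRR]; ring
    refine (sum_le_sum bound).trans ?_
    rw [sum_ite, ← mul_sum, sum_const, nsmul_eq_mul]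
    have s1 : (F.erase x).filter (fun y => γ.SameCycle x y) = (F ∩ orb γ x).erase x := by
      ext z; simp only [mem_filter, mem_erase, mem_inter, mem_orb]; tauto
    rw [s1, sum_arc (fun a b => f a * f b) γ F hx, ← hq, total]
    have hterm : 0 ≤ (N ^ 4)⁻¹ * (B * f q) := by have := hf q; positivity
    have hcard : (((F.erase x).filter (fun y => ¬ γ.SameCycle x y)).card : ℝ) ≤ Fintype.card V := by
      exact_mod_cast card_le_univ _
    have h1 := H1 q hq1 hqp
    have hbR : 0 ≤ b * R := by positivity
    calc _ ≤ b * R * ∑ j ∈ range (q - 1), f (q - 2 - j) * f j +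
          (Fintype.card V) * (b * R * ((N ^ 4)⁻¹ * (B * f q))) := by
            gcongr
      _ = b * R * (∑ j ∈ range (q - 1), f (q - 2 - j) * f j +
          (Fintype.card V) * ((N ^ 4)⁻¹ * (B * f q))) := by ring
      _ ≤ b * R * f q := by gcongr
      _ = b * (f q * R) := by ring

theorem tt_lim (F : Finset V) (γ : Perm V) :
    Tendsto (fun n : ℕ => tt (n : ℝ) F γ 1) atTop
      (nhds (∏ C ∈ cycs γ, hseq 0 ((C ∩ F).card))) := by
  induction hk : F.card using Nat.strong_induction_on generalizing F γ with
  | _ k ih =>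
  rcases F.eq_empty_or_nonempty with rfl | ⟨x, hx⟩
  · simp only [inter_empty, card_empty, hseq_zero, prod_const_one]
    apply tendsto_const_nhds.congr'
    filter_upwards [eventually_gt_atTop 0] with n hn
    rw [tt_empty, mul_one, mul_one, cyc_inv, ← two_mul, div_self]
    positivity
  · set q := (F ∩ orb γ x).card with hq
    have hq1 : 1 ≤ q := card_pos.2 ⟨x, mem_inter.2 ⟨hx, self_mem_orb _ _⟩⟩
    set R := ∏ C ∈ (cycs γ).erase (orb γ x), hseq 0 ((C ∩ F).card) with hR
    have total : ∏ C ∈ cycs γ, hseq 0 ((C ∩ F).card) = hseq 0 q * R := by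
      rw [← Finset.mul_prod_erase (cycs γ) _ (orb_mem_cycs γ x), inter_comm]
    have IH : ∀ y ∈ F.erase x, Tendsto (fun n : ℕ =>
        (if γ.SameCycle x y then 1 else ((n : ℝ) ^ 4)⁻¹) *
        tt (n : ℝ) ((F.erase x).erase y) (γ * swap x y) 1) atTop (nhds
        (if γ.SameCycle x y then R * (hseq 0 (((orb γ x \ arc γ x y) ∩ (F.erase x).erase y).card) *
          hseq 0 ((arc γ x y ∩ (F.erase x).erase y).card)) else 0)) := by
      intro y hy
      have hy' := mem_erase.1 hy
      have := ih _ (by rw [← hk]; exact card_erase_lt hx) ((F.erase x).erase y) (γ * swap x y) rfl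
      split_ifs with h
      · rw [prodf_split (hseq 0) F h hy'.1.symm] at this
        simpa using this
      · have h4 : Tendsto (fun n : ℕ => ((n : ℝ) ^ 4)⁻¹) atTop (nhds 0) := by
          apply Tendsto.inv_tendsto_atTop
          exact (tendsto_pow_atTop (by norm_num)).comp tendsto_natCast_atTop_atTop
        simpa using h4.mul this
    have lim := tendsto_finsetSum _ IH
    rw [sum_ite, ← mul_sum, sum_const_zero, add_zero] at lim
    have s1 : (F.erase x).filter (fun y => γ.SameCycle x y) = (F ∩ orb γ x).erase x := by
      ext z; simp only [mem_filter, mem_erase, mem_inter, mem_orb]; tauto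
    rw [s1, sum_arc (fun a b => hseq 0 a * hseq 0 b) γ F hx, ← hq] at lim
    have hrec : ∑ j ∈ range (q - 1), hseq 0 (q - 2 - j) * hseq 0 j = hseq 0 q := by
      rcases hq1.eq_or_lt with h | h
      · rw [← h]; simp [hseq_one]
      · exact hseq_rec 0 h
    rw [hrec, mul_comm] at lim
    rw [total]
    apply lim.congr'
    filter_upwards [eventually_gt_atTop 0] with n hn
    rw [← tt_rec (by exact_mod_cast hn) (by simp) hx]

end Induct
end PPT

namespace PPT
section Psi
set_option linter.unusedSectionVars false
open Equiv Equiv.Perm Finset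
variable {V : Type*} [Fintype V] [DecidableEq V]

open Classical in
/-- Permutations without fixed point -/
noncomputable def Der (V : Type*) [Fintype V] [DecidableEq V] : Finset (Perm V) :=
  univ.filter (fun α => ∀ i, α i ≠ i)

open Classical in
/-- Permutations without 2-cycles -/
noncomputable def NT (V : Type*) [Fintype V] [DecidableEq V] : Finset (Perm V) :=
  univ.filter (fun l => NoTwo l)

lemma mem_Der {α : Perm V} : α ∈ Der V ↔ ∀ i, α i ≠ i := by simp [Der]
lemma mem_NT {l : Perm V} : l ∈ NT V ↔ NoTwo l := by simp [NT]

/-- The part of `α` on its cycles of length `≥ 3`. -/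
noncomputable def part3 (α : Perm V) : Perm V :=
  ofSubtype (α.subtypePerm (p := fun i => α (α i) ≠ i) (by
    intro i; simp))

lemma part3_apply_of {α : Perm V} {i : V} (h : α (α i) ≠ i) : part3 α i = α i := by
  unfold part3
  exact ofSubtype_apply_of_mem (p := fun i => α (α i) ≠ i) _ h

lemma part3_apply_of_not {α : Perm V} {i : V} (h : α (α i) = i) : part3 α i = i := by
  unfold part3
  rw [ofSubtype_apply_of_not_mem]
  simpa using h

lemma part3_noTwo (α : Perm V) : NoTwo (part3 α) := by
  intro i h
  by_cases hi : α (α i) = i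
  · exact part3_apply_of_not hi
  · rw [part3_apply_of hi, part3_apply_of (fun h' => hi (α.injective h'))] at h
    exact absurd h hi

lemma sum_Der {M : Type*} [AddCommMonoid M] (φ : Perm V → M) :
    ∑ α ∈ Der V, φ α = ∑ l ∈ NT V, ∑ β ∈ PairSet (l.supportᶜ), φ (l * β) := by
  rw [← Finset.sum_fiberwise_of_maps_to (s := Der V) (t := NT V) (g := part3)
    (fun α _ => mem_NT.2 (part3_noTwo α))]
  refine sum_congr rfl fun l hl => ?_
  rw [mem_NT] at hl
  refine Finset.sum_bij' (fun α _ => l⁻¹ * α) (fun β _ => l * β) ?_ ?_ ?_ ?_ ?_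
  · intro α hα
    rw [mem_filter, mem_Der] at hα
    obtain ⟨hD, rfl⟩ := hα
    have e1 : ∀ i, α (α i) = i → ((part3 α)⁻¹ * α) i = α i := by
      intro i hi
      rw [Perm.mul_apply, Perm.inv_eq_iff_eq]
      rw [part3_apply_of_not (by rw [hi])]
    have e2 : ∀ i, α (α i) ≠ i → ((part3 α)⁻¹ * α) i = i := by
      intro i hi
      rw [Perm.mul_apply, Perm.inv_eq_iff_eq, part3_apply_of hi]
    rw [mem_PairSet]
    constructor
    · ext i
      rw [Perm.mul_apply, Perm.one_apply]
      by_cases hi : α (α i) = i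
      · rw [e1 i hi, e1 (α i) (by rw [hi]), hi]
      · rw [e2 i hi, e2 i hi]
    · ext i
      rw [mem_compl, mem_support, mem_support]
      by_cases hi : α (α i) = i
      · rw [e1 i hi, part3_apply_of_not hi]; simp [hD i]
      · rw [e2 i hi, part3_apply_of hi]; simp [hD i]
  · intro β hβ
    rw [mem_PairSet] at hβ
    obtain ⟨h1, h2⟩ := hβ
    have c1 : ∀ i, l i ≠ i → (l * β) i = l i := by
      intro i hi
      have : β i = i := by rw [← notMem_support, h2]; simpa using hi
      rw [Perm.mul_apply, this]
    have c2 : ∀ i, l i = i → (l * β) i = β i ∧ l (β i) = β i := by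
      intro i hi
      have h3 : i ∈ β.support := by rw [h2]; simpa using hi
      have : l (β i) = β i := by
        have h4 := apply_mem_support.2 h3
        rw [h2] at h4; simpa using h4
      rw [Perm.mul_apply, this]; exact ⟨rfl, rfl⟩
    rw [mem_filter, mem_Der]
    constructor
    · intro i
      by_cases hi : l i = i
      · rw [(c2 i hi).1, ← mem_support, h2]; simpa using hi
      · rw [c1 i hi]; exact hi
    · ext i
      by_cases hi : l i = i
      · rw [part3_apply_of_not, hi]
        rw [(c2 i hi).1, (c2 _ (c2 i hi).2).1, ← Perm.mul_apply, h1, Perm.one_apply]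
      · rw [part3_apply_of, c1 i hi]
        rw [c1 i hi, c1 (l i) (fun h => hi (l.injective h))]
        exact fun h => hi (hl i h)
  · intro α _; simp
  · intro β _; simp
  · intro α _; simp

lemma cyc_mul_pair {l : Perm V} (F : Finset V) (hl : ∀ z ∈ F, l z = z) :
    ∀ β ∈ PairSet F, 2 * cyc (l * β) + F.card = 2 * cyc l := by
  induction hk : F.card using Nat.strong_induction_on generalizing F with
  | _ k ih =>
  rcases F.eq_empty_or_nonempty with rfl | ⟨x, hx⟩
  · intro β hβ
    rw [PairSet_empty, mem_singleton] at hβ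
    subst hβ; simpa using hk.symm
  · have key := sum_PairSet (fun β => if 2 * cyc (l * β) + F.card = 2 * cyc l then 0 else 1) hx
    have z : ∑ y ∈ F.erase x, ∑ β ∈ PairSet ((F.erase x).erase y),
        (if 2 * cyc (l * (β * swap x y)) + F.card = 2 * cyc l then 0 else 1) = 0 := by
      apply sum_eq_zero
      intro y hy
      have hy' := mem_erase.1 hy
      apply sum_eq_zero
      intro β hβ
      rw [if_pos]
      have h1 := ih _ (by rw [← hk]; exact card_erase_lt hx) ((F.erase x).erase y)
        (fun z hz => hl z (mem_of_mem_erase (mem_of_mem_erase hz))) rfl β hβ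
      rw [mem_PairSet] at hβ
      have hx' : β x = x := by rw [← notMem_support, hβ.2]; simp
      have hfx : (l * β) x = x := by rw [Perm.mul_apply, hx', hl x hx]
      have hns : ¬ (l * β).SameCycle x y := by
        rintro ⟨i, hi⟩
        rw [Perm.zpow_apply_eq_self_of_apply_eq_self hfx] at hi
        exact hy'.1 hi.symm
      have h2 := cyc_merge (l * β) hns
      rw [← mul_assoc]
      have h3 : ((F.erase x).erase y).card + 2 = F.card := by
        have := card_erase_add_one hy
        have := card_erase_add_one hx
        omega
      omega
    rw [z] at key
    intro β hβ
    have := sum_eq_zero_iff.1 key β hβ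
    by_contra h
    rw [← hk] at h
    rw [if_neg h] at this
    exact one_ne_zero this

lemma supp_add_cyc (l : Perm V) :
    l.support.card + 2 * cyc l ≤ 2 * Fintype.card V ∧
      Fintype.card V ≤ l.support.card + cyc l := by
  have hw := sum_wt l
  have e1 : (Fintype.card V : ℝ) = ∑ i : V, (1 : ℝ) := by simp
  have e2 : (l.support.card : ℝ) = ∑ i : V, if i ∈ l.support then (1 : ℝ) else 0 := by
    rw [sum_ite_mem, univ_inter, sum_const, nsmul_eq_mul, mul_one]
  constructor
  · have : (l.support.card : ℝ) + 2 * cyc l ≤ 2 * Fintype.card V := by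
      rw [e2, ← hw, e1, mul_sum, mul_sum, ← sum_add_distrib]
      apply sum_le_sum
      intro i _
      split_ifs with h
      · have := wt_le_half (mem_support.1 h); linarith
      · have := wt_le_one l i; linarith
    exact_mod_cast this
  · have : (Fintype.card V : ℝ) ≤ l.support.card + cyc l := by
      rw [e2, ← hw, e1, ← sum_add_distrib]
      apply sum_le_sum
      intro i _
      split_ifs with h
      · have := wt_nonneg l i; linarith
      · have := wt_fix (notMem_support.1 h); linarith
    exact_mod_cast this

/-- The expected trace. -/
noncomputable def psi (γ : Perm V) (s n : ℝ) : ℝ :=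
  ∑ α ∈ Der V, s ^ cyc α * n ^ (cyc (γ⁻¹ * α) + cyc (γ * α))

/-- The contribution of `l`. -/
noncomputable def term (γ : Perm V) (r n : ℝ) (l : Perm V) : ℝ :=
  (n / r) ^ (2 * Fintype.card V - (l.support.card + 2 * cyc l)) /
    n ^ (2 * (Fintype.card V - cyc l)) * tt n (l.supportᶜ) γ l

lemma psi_eq (γ : Perm V) {r n : ℝ} (hr : 0 < r) (hn : 0 < n) :
    psi γ (r ^ 2) n = (r * n) ^ Fintype.card V * n ^ (2 * cyc γ) * ∑ l ∈ NT V, term γ r n l := by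
  unfold psi
  rw [sum_Der, mul_sum]
  refine sum_congr rfl fun l hl => ?_
  have hfix : ∀ z ∈ l.supportᶜ, l z = z := by intro z hz; simpa using hz
  have hcard : l.supportᶜ.card + l.support.card = Fintype.card V := by
    rw [add_comm]; exact card_add_card_compl _
  have hcyc := cyc_mul_pair _ hfix
  have h1 : ∀ β ∈ PairSet (l.supportᶜ),
      (r ^ 2) ^ cyc (l * β) * n ^ (cyc (γ⁻¹ * (l * β)) + cyc (γ * (l * β))) =
      (r ^ (2 * cyc l) / r ^ (l.supportᶜ.card)) *
        n ^ (cyc (γ⁻¹ * (l * β)) + cyc (γ * (l * β))) := by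
    intro β hβ
    congr 1
    rw [eq_div_iff (by positivity), ← hcyc β hβ, ← pow_mul, ← pow_add]
  rw [sum_congr rfl h1, ← mul_sum]
  unfold term tt
  obtain ⟨b1, b2⟩ := supp_add_cyc l
  have b3 := cyc_le_card l
  set S := ∑ β ∈ PairSet (l.supportᶜ), n ^ (cyc (γ⁻¹ * (l * β)) + cyc (γ * (l * β)))
  set p := Fintype.card V
  set D := 2 * p - (l.support.card + 2 * cyc l) with hD
  rw [div_pow, mul_pow, pow_add]
  have e1 : r ^ p * r ^ (l.supportᶜ.card) = r ^ (2 * cyc l) * r ^ D := by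
    rw [← pow_add, ← pow_add]; congr 1; omega
  have e2 : n ^ p * n ^ D = n ^ (2 * (p - cyc l)) * n ^ l.supportᶜ.card := by
    rw [← pow_add, ← pow_add]; congr 1; omega
  field_simp
  calc _ = S * (r ^ (2 * cyc l) * r ^ D) * (n ^ (2 * (p - cyc l)) * n ^ l.supportᶜ.card) := by ring
    _ = S * (r ^ p * r ^ (l.supportᶜ.card)) * (n ^ p * n ^ D) := by rw [e1, e2]
    _ = _ := by ring

lemma term_nonneg (γ : Perm V) {r n : ℝ} (hr : 0 < r) (hn : 0 < n) (l : Perm V) :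
    0 ≤ term γ r n l := by
  unfold term
  have := tt_nonneg hn (l.supportᶜ) γ l
  positivity

lemma term_le (γ : Perm V) {r n m κ B Φ : ℝ} {f : ℕ → ℝ} (hr : 0 < r) (hm : 1 ≤ m)
    (hmn : m ^ 10 = n) (hκ : 1 ≤ κ) (hnr : n / r ≤ κ) (hB : 0 ≤ B)
    (hf0 : f 0 = 1) (hf : ∀ q, 0 ≤ f q) (hfΦ : ∀ q, q ≤ Fintype.card V → f q ≤ Φ)
    (H1 : ∀ q, 1 ≤ q → q ≤ Fintype.card V →
      ∑ j ∈ range (q - 1), f (q - 2 - j) * f j +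
        (Fintype.card V) * ((n ^ 4)⁻¹ * (B * f q)) ≤ f q)
    (H2 : ∀ u v, 1 ≤ u → 1 ≤ v → u + v ≤ Fintype.card V → f (u + v - 2) ≤ B * f u * f v)
    {l : Perm V} (hl : NoTwo l) :
    term γ r n l ≤ (κ / m) ^ l.support.card * Φ ^ cyc γ := by
  have hm0 : 0 < m := by linarith
  have hn : 0 < n := by rw [← hmn]; positivity
  obtain ⟨b1, b2⟩ := supp_add_cyc l
  have b3 := cyc_le_card l
  set p := Fintype.card V with hp
  have hb : ∀ γ : Perm V, tt n ∅ γ l ≤ n ^ (2 * (p - cyc l)) / m ^ l.support.card := by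
    intro γ
    have := loop_bound hl γ
    rw [tt_empty, div_le_div_iff₀ (by positivity) (by positivity), ← hmn, ← pow_mul, ← pow_mul,
      ← pow_mul, ← pow_add, ← pow_add]
    apply pow_le_pow_right₀ hm
    omega
  have hu := tt_upper hn (b := n ^ (2 * (p - cyc l)) / m ^ l.support.card) (by positivity)
    hB hf0 hf hb H1 H2 (l.supportᶜ) (by intro z hz; simpa using hz) γ
  have hprod : ∏ C ∈ cycs γ, f ((C ∩ l.supportᶜ).card) ≤ Φ ^ cyc γ := by
    unfold cyc
    rw [← prod_const]
    apply Finset.prod_le_prod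
    · intro C _; exact hf _
    · intro C _; exact hfΦ _ (card_le_univ _)
  have hΦ : 0 ≤ Φ := (hf 0).trans (hfΦ 0 (by omega))
  unfold term
  calc _ ≤ κ ^ l.support.card / n ^ (2 * (p - cyc l)) *
        (n ^ (2 * (p - cyc l)) / m ^ l.support.card * Φ ^ cyc γ) := by
        apply mul_le_mul _ _ (tt_nonneg hn _ _ _) (by positivity)
        · gcongr
          calc (n / r) ^ (2 * p - (l.support.card + 2 * cyc l))
              ≤ κ ^ (2 * p - (l.support.card + 2 * cyc l)) := by gcongr
            _ ≤ κ ^ l.support.card := pow_le_pow_right₀ hκ (by omega)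
        · refine hu.trans ?_
          gcongr
    _ = _ := by rw [div_pow]; field_simp

lemma sum_supp_le {z : ℝ} (hz : 0 ≤ z) :
    ∑ l : Perm V, z ^ l.support.card ≤ (1 + Fintype.card V * z) ^ Fintype.card V := by
  rw [← Finset.sum_fiberwise_of_maps_to (s := univ) (t := univ) (g := fun l : Perm V => l.support)
    (fun _ _ => mem_univ _)]
  have h1 : ∀ S ∈ (univ : Finset (Finset V)), ∑ l ∈ univ.filter (fun l : Perm V => l.support = S),
      z ^ l.support.card ≤ (Fintype.card V * z) ^ S.card := by
    intro S _
    have : ∀ l ∈ univ.filter (fun l : Perm V => l.support = S),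
      z ^ l.support.card = z ^ S.card := by
      intro l hl; rw [(mem_filter.1 hl).2]
    rw [sum_congr rfl this, sum_const, nsmul_eq_mul, mul_pow]
    gcongr
    have hc : (univ.filter (fun l : Perm V => l.support = S)).card ≤
        (univ : Finset (S → V)).card := by
      apply card_le_card_of_injOn (fun l => fun a : S => l a) (fun _ _ => mem_univ _)
      intro l hl l' hl' h
      have hl := (mem_filter.1 hl).2
      have hl' := (mem_filter.1 hl').2
      ext i
      by_cases hi : i ∈ S
      · exact congrFun h ⟨i, hi⟩
      · have h1 : l i = i := by rw [← notMem_support, hl]; exact hi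
        have h2 : l' i = i := by rw [← notMem_support, hl']; exact hi
        rw [h1, h2]
    rw [card_univ, Fintype.card_fun, Fintype.card_coe] at hc
    exact_mod_cast hc
  refine (sum_le_sum h1).trans (le_of_eq ?_)
  have := Finset.sum_pow_mul_eq_add_pow (Fintype.card V * z) (1 : ℝ) (univ : Finset V)
  simp only [one_pow, mul_one, powerset_univ, card_univ] at this
  rw [this, add_comm]

theorem psi_upper (γ : Perm V) {r n m κ B Φ : ℝ} {f : ℕ → ℝ} (hr : 0 < r) (hm : 1 ≤ m)
    (hmn : m ^ 10 = n) (hκ : 1 ≤ κ) (hnr : n / r ≤ κ) (hB : 0 ≤ B)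
    (hf0 : f 0 = 1) (hf : ∀ q, 0 ≤ f q) (hfΦ : ∀ q, q ≤ Fintype.card V → f q ≤ Φ)
    (H1 : ∀ q, 1 ≤ q → q ≤ Fintype.card V →
      ∑ j ∈ range (q - 1), f (q - 2 - j) * f j +
        (Fintype.card V) * ((n ^ 4)⁻¹ * (B * f q)) ≤ f q)
    (H2 : ∀ u v, 1 ≤ u → 1 ≤ v → u + v ≤ Fintype.card V → f (u + v - 2) ≤ B * f u * f v) :
    psi γ (r ^ 2) n ≤ (r * n) ^ Fintype.card V * n ^ (2 * cyc γ) *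
      ((1 + Fintype.card V * (κ / m)) ^ Fintype.card V * Φ ^ cyc γ) := by
  have hm0 : 0 < m := by linarith
  have hn : 0 < n := by rw [← hmn]; positivity
  have hΦ : 0 ≤ Φ := (hf 0).trans (hfΦ 0 (by omega))
  rw [psi_eq γ hr hn]
  apply mul_le_mul_of_nonneg_left _ (by positivity)
  calc _ ≤ ∑ l ∈ NT V, (κ / m) ^ l.support.card * Φ ^ cyc γ :=
        sum_le_sum fun l hl => term_le γ hr hm hmn hκ hnr hB hf0 hf hfΦ H1 H2 (mem_NT.1 hl)
    _ ≤ ∑ l : Perm V, (κ / m) ^ l.support.card * Φ ^ cyc γ :=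
        sum_le_sum_of_subset_of_nonneg (subset_univ _) (fun _ _ _ => by positivity)
    _ ≤ _ := by
        rw [← sum_mul]
        gcongr
        exact sum_supp_le (by positivity)

end Psi
end PPT

namespace PPT
section PsiSpec
set_option linter.unusedSectionVars false
open Equiv Equiv.Perm Finset
variable {V : Type*} [Fintype V] [DecidableEq V]

/-- the majorant sequence -/
noncomputable def ff (ε : ℝ) (q : ℕ) : ℝ := (1 + ε) ^ q * hseq ε q

/-- the merging constant -/
noncomputable def BB (ε : ℝ) (p : ℕ) : ℝ := 512 * (p + 1) ^ 4 / (ε ^ 2 * (1 - ε) ^ p)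

lemma ff_nonneg {ε : ℝ} (hε : 0 < ε) (q : ℕ) : 0 ≤ ff ε q := by
  have := hseq_nonneg hε.le q
  unfold ff; positivity

lemma ff_H2 {ε : ℝ} (hε : 0 < ε) (hε1 : ε < 1) (p u v : ℕ) (huv : u + v ≤ p) :
    ff ε (u + v - 2) ≤ BB ε p * ff ε u * ff ε v := by
  have h0 : 0 < 1 - ε := by linarith
  have hu := hseq_lower hε.le hε1.le u
  have hv := hseq_lower hε.le hε1.le v
  have pu := hseq_nonneg hε.le u
  have pv := hseq_nonneg hε.le v
  have pw := hseq_nonneg hε.le (u + v - 2)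
  have hup : (u : ℝ) ≤ p := by exact_mod_cast (by omega : u ≤ p)
  have hvp : (v : ℝ) ≤ p := by exact_mod_cast (by omega : v ≤ p)
  have hu' : ε * 2 ^ u ≤ 16 * (p + 1) ^ 2 * hseq ε u := hu.trans (by gcongr)
  have hv' : ε * 2 ^ v ≤ 16 * (p + 1) ^ 2 * hseq ε v := hv.trans (by gcongr)
  have hw := hseq_le hε.le hε1 (u + v - 2)
  have hw2 : hseq ε (u + v - 2) ≤ 2 * (2 ^ (u + v) / (1 - ε) ^ p) := by
    refine hw.trans ?_
    rw [div_pow]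
    have a1 : (2 : ℝ) ^ (u + v - 2) ≤ 2 ^ (u + v) := pow_le_pow_right₀ (by norm_num) (by omega)
    have a2 : (1 - ε) ^ p ≤ (1 - ε) ^ (u + v - 2) :=
      pow_le_pow_of_le_one h0.le (by linarith) (by omega)
    gcongr
  have hmul : ε ^ 2 * 2 ^ (u + v) ≤ 256 * (p + 1) ^ 4 * (hseq ε u * hseq ε v) := by
    have := mul_le_mul hu' hv' (by positivity) (by positivity)
    rw [pow_add]
    calc ε ^ 2 * (2 ^ u * 2 ^ v) = (ε * 2 ^ u) * (ε * 2 ^ v) := by ring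
      _ ≤ _ := this
      _ = _ := by ring
  have hB : hseq ε (u + v - 2) ≤ BB ε p * (hseq ε u * hseq ε v) := by
    refine hw2.trans ?_
    unfold BB
    have e : 512 * ((p : ℝ) + 1) ^ 4 / (ε ^ 2 * (1 - ε) ^ p) * (hseq ε u * hseq ε v) =
      2 * ((256 * (p + 1) ^ 4 * (hseq ε u * hseq ε v)) / ε ^ 2 / (1 - ε) ^ p) := by
      field_simp; ring
    rw [e]
    gcongr
    rw [le_div_iff₀ (by positivity)]
    linarith
  unfold ff
  calc (1 + ε) ^ (u + v - 2) * hseq ε (u + v - 2)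
      ≤ (1 + ε) ^ (u + v) * (BB ε p * (hseq ε u * hseq ε v)) := by
        apply mul_le_mul _ hB pw (by positivity)
        exact pow_le_pow_right₀ (by linarith) (by omega)
    _ = _ := by rw [pow_add]; ring

lemma ff_H1 {ε : ℝ} (hε : 0 < ε) (hε1 : ε < 1) {p n : ℝ}
    {B : ℝ} (hc : p * ((n ^ 4)⁻¹ * B) ≤ ε / 2) (q : ℕ) (hq : 1 ≤ q) :
    ∑ j ∈ range (q - 1), ff ε (q - 2 - j) * ff ε j + p * ((n ^ 4)⁻¹ * (B * ff ε q)) ≤ ff ε q := by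
  have hfq := ff_nonneg hε q
  have h1 : p * ((n ^ 4)⁻¹ * (B * ff ε q)) ≤ ε / 2 * ff ε q := by
    calc _ = p * ((n ^ 4)⁻¹ * B) * ff ε q := by ring
      _ ≤ _ := by gcongr
  rcases hq.eq_or_lt with h | h
  · obtain rfl : q = 1 := h.symm
    simp only [Nat.sub_self, range_zero, sum_empty, zero_add]
    nlinarith
  · have e : ∑ j ∈ range (q - 1), ff ε (q - 2 - j) * ff ε j = (1 + ε) ^ (q - 2) * hseq ε q := by
      rw [← hseq_rec ε h, mul_sum]
      apply sum_congr rfl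
      intro j hj
      rw [mem_range] at hj
      unfold ff
      have : (1 + ε) ^ (q - 2) = (1 + ε) ^ (q - 2 - j) * (1 + ε) ^ j := by
        rw [← pow_add]; congr 1; omega
      rw [this]; ring
    rw [e]
    have e2 : ff ε q = (1 + ε) ^ 2 * ((1 + ε) ^ (q - 2) * hseq ε q) := by
      unfold ff
      rw [← mul_assoc, ← pow_add]; congr 2; omega
    have hX : 0 ≤ (1 + ε) ^ (q - 2) * hseq ε q := by
      have := hseq_nonneg hε.le q; positivity
    rw [e2] at h1 ⊢
    have h3 : 1 + ε / 2 * (1 + ε) ^ 2 ≤ (1 + ε) ^ 2 := by nlinarith [mul_pos hε hε]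
    nlinarith

lemma ff_le {ε : ℝ} (hε : 0 < ε) (hε1 : ε < 1) {p q : ℕ} (hq : q ≤ p) :
    ff ε q ≤ 2 * (2 * (1 + ε) / (1 - ε)) ^ p := by
  have h0 : 0 < 1 - ε := by linarith
  have h1 : 1 ≤ 2 * (1 + ε) / (1 - ε) := by rw [le_div_iff₀ h0]; linarith
  unfold ff
  calc (1 + ε) ^ q * hseq ε q ≤ (1 + ε) ^ q * (2 * (2 / (1 - ε)) ^ q) := by
        gcongr; exact hseq_le hε.le hε1 q
    _ = 2 * (2 * (1 + ε) / (1 - ε)) ^ q := by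
        rw [mul_div_right_comm, mul_pow]; ring
    _ ≤ _ := by gcongr

lemma BB_nonneg {ε : ℝ} (hε1 : ε < 1) (p : ℕ) : 0 ≤ BB ε p := by
  have h0 : 0 < 1 - ε := by linarith
  unfold BB; positivity

theorem psi_upper' (γ : Perm V) {r n m κ ε : ℝ} (hr : 0 < r) (hm : 1 ≤ m)
    (hmn : m ^ 10 = n) (hκ : 1 ≤ κ) (hnr : n / r ≤ κ) (hε : 0 < ε) (hε1 : ε < 1)
    (hc : (Fintype.card V) * ((n ^ 4)⁻¹ * BB ε (Fintype.card V)) ≤ ε / 2) :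
    psi γ (r ^ 2) n ≤ (r * n) ^ Fintype.card V * n ^ (2 * cyc γ) *
      ((1 + Fintype.card V * (κ / m)) ^ Fintype.card V *
        (2 * (2 * (1 + ε) / (1 - ε)) ^ Fintype.card V) ^ cyc γ) := by
  apply psi_upper γ hr hm hmn hκ hnr (BB_nonneg hε1 _) (f := ff ε)
  · simp [ff, hseq_zero]
  · exact ff_nonneg hε
  · exact fun q hq => ff_le hε hε1 hq
  · exact fun q hq _ => ff_H1 hε hε1 hc q hq
  · exact fun u v _ _ h => ff_H2 hε hε1 _ u v h

theorem psi_lim (γ : Perm V) (r : ℕ → ℝ) {κ : ℝ} (hκ : 1 ≤ κ)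
    (hr : ∀ᶠ n : ℕ in atTop, 0 < r n ∧ n / r n ≤ κ) :
    Tendsto (fun n : ℕ => psi γ (r n ^ 2) n /
        ((r n * n) ^ Fintype.card V * (n : ℝ) ^ (2 * cyc γ))) atTop
      (nhds (∏ C ∈ cycs γ, hseq 0 C.card)) := by
  have one_mem : (1 : Perm V) ∈ NT V := by rw [mem_NT]; intro i _; simp
  have hmlim : Tendsto (fun n : ℕ => (n : ℝ) ^ ((1 : ℝ) / 10)) atTop atTop :=
    (tendsto_rpow_atTop (by norm_num)).comp tendsto_natCast_atTop_atTop
  have lim : Tendsto (fun n : ℕ => ∑ l ∈ NT V, term γ (r n) n l) atTop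
      (nhds (∑ l ∈ NT V, if l = 1 then ∏ C ∈ cycs γ, hseq 0 C.card else 0)) := by
    apply tendsto_finsetSum
    intro l hl
    split_ifs with h1
    · subst h1
      have := tt_lim (univ : Finset V) γ
      simp only [inter_univ] at this
      apply this.congr'
      filter_upwards [eventually_gt_atTop 0] with n hn
      have hc : cyc (1 : Perm V) = Fintype.card V := by
        have h2 := supp_add_cyc (1 : Perm V)
        have h3 := cyc_le_card (1 : Perm V)
        simp at h2; omega
      unfold term
      simp [hc]
    · -- upper bound
      have hlpos : 0 < l.support.card := by
        rw [card_pos, nonempty_iff_ne_empty, Ne, support_eq_empty_iff]; exact h1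
      set Φ : ℝ := (2 * (2 * (1 + 1 / 2) / (1 - 1 / 2)) ^ Fintype.card V) ^ cyc γ with hΦ
      have up : Tendsto (fun n : ℕ => (κ / (n : ℝ) ^ ((1 : ℝ) / 10)) ^ l.support.card *
          Φ) atTop (nhds 0) := by
        have : Tendsto (fun n : ℕ => κ / (n : ℝ) ^ ((1 : ℝ) / 10)) atTop (nhds 0) :=
          hmlim.const_div_atTop κ
        have h2 := (this.pow l.support.card).mul_const Φ
        rwa [zero_pow hlpos.ne', zero_mul] at h2
      have h4 : Tendsto (fun n : ℕ => (Fintype.card V : ℝ) *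
          (((n : ℝ) ^ 4)⁻¹ * BB (1 / 2) (Fintype.card V))) atTop (nhds 0) := by
        have h4 : Tendsto (fun n : ℕ => ((n : ℝ) ^ 4)⁻¹) atTop (nhds 0) := by
          apply Tendsto.inv_tendsto_atTop
          exact (tendsto_pow_atTop (by norm_num)).comp tendsto_natCast_atTop_atTop
        simpa using (h4.mul_const (BB (1 / 2) (Fintype.card V))).const_mul (Fintype.card V : ℝ)
      refine tendsto_of_tendsto_of_tendsto_of_le_of_le' tendsto_const_nhds up ?_ ?_
      · filter_upwards [hr, eventually_gt_atTop 0] with n hrn hn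
        exact term_nonneg γ hrn.1 (by exact_mod_cast hn) l
      · filter_upwards [hr, eventually_ge_atTop 1,
          h4.eventually (gt_mem_nhds (show (0 : ℝ) < (1 / 2) / 2 by norm_num))] with n hrn hn hc
        have hn1 : (1 : ℝ) ≤ n := by exact_mod_cast hn
        refine term_le γ (f := ff (1 / 2)) (n := (n : ℝ)) hrn.1 ?_ ?_ hκ hrn.2
          (BB_nonneg (by norm_num : (1 / 2 : ℝ) < 1) (Fintype.card V)) ?_ ?_ ?_ ?_ ?_ (mem_NT.1 hl)
        · exact Real.one_le_rpow hn1 (by norm_num)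
        · rw [← Real.rpow_natCast, ← Real.rpow_mul (by positivity)]; norm_num
        · simp [ff, hseq_zero]
        · exact ff_nonneg (by norm_num)
        · exact fun q hq => ff_le (by norm_num) (by norm_num) hq
        · exact fun q hq _ => ff_H1 (by norm_num) (by norm_num) hc.le q hq
        · exact fun u v _ _ h => ff_H2 (by norm_num) (by norm_num) _ u v h
  rw [sum_ite_eq' (NT V) 1, if_pos one_mem] at lim
  apply lim.congr'
  filter_upwards [hr, eventually_gt_atTop 0] with n hrn hn
  have hn' : (0 : ℝ) < n := by exact_mod_cast hn
  rw [psi_eq γ hrn.1 hn', mul_div_cancel_left₀]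
  have := hrn.1
  positivity

end PsiSpec
end PPT

namespace PPT
section Gauss

lemma meas_scg : Measurable (fun p : ℝ × ℝ => ((p.1 : ℂ) + p.2 * Complex.I) / (Real.sqrt 2 : ℝ)) := by
  fun_prop

instance : IsProbabilityMeasure stdComplexGaussian :=
  Measure.isProbabilityMeasure_map meas_scg.aemeasurable

lemma memLp_scg (p : ℕ) : MemLp (id : ℂ → ℂ) p stdComplexGaussian := by
  unfold stdComplexGaussian
  rw [memLp_map_measure_iff measurable_id.aestronglyMeasurable meas_scg.aemeasurable]
  have h := memLp_id_gaussianReal (μ := 0) (v := 1) p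
  have h1 := (h.comp_fst (gaussianReal 0 1)).ofReal (K := ℂ)
  have h2 := (h.comp_snd (gaussianReal 0 1)).ofReal (K := ℂ)
  have h3 := (h1.add (h2.const_mul Complex.I)).const_mul ((Real.sqrt 2 : ℝ) : ℂ)⁻¹
  refine MemLp.ae_eq (ae_of_all _ ?_) (by exact_mod_cast h3)
  intro x
  simp [div_eq_inv_mul, mul_comm]

lemma integrable_mom (a b : ℕ) :
    Integrable (fun z : ℂ => z ^ a * (starRingEnd ℂ z) ^ b) stdComplexGaussian := by
  by_cases hab : a + b = 0
  · have : a = 0 := by omega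
    have : b = 0 := by omega
    subst_vars
    simp
  have h := (memLp_scg (a + b)).integrable_norm_pow hab
  refine h.mono' (by fun_prop) (ae_of_all _ ?_)
  intro z
  simp [pow_add]

lemma radial (a : ℕ) : ∫ r in Set.Ioi (0 : ℝ), r * (r ^ 2 / 2) ^ a * Real.exp (-r ^ 2 / 2) = (a.factorial : ℝ) := by
  have h := integral_rpow_mul_exp_neg_mul_rpow (p := 2) (q := 2 * a + 1) (b := 1 / 2) (by norm_num)
    (by have : (0:ℝ) ≤ a := by positivity
        linarith) (by norm_num)
  have e : ∫ r in Set.Ioi (0 : ℝ), r * (r ^ 2 / 2) ^ a * Real.exp (-r ^ 2 / 2)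
      = ∫ r in Set.Ioi (0 : ℝ), (1 / 2) ^ a * (r ^ (2 * (a : ℝ) + 1) * Real.exp (-(1 / 2) * r ^ (2 : ℝ))) := by
    apply setIntegral_congr_fun measurableSet_Ioi
    intro r hr
    simp only
    have hr' : (0 : ℝ) < r := hr
    have : (2 * (a : ℝ) + 1) = ((2 * a + 1 : ℕ) : ℝ) := by push_cast; ring
    rw [this, Real.rpow_natCast, Real.rpow_ofNat, pow_succ r (2 * a), pow_mul, div_pow]
    have : -r ^ 2 / 2 = -(1/2) * r ^ 2 := by ring
    rw [this]
    field_simp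
    rw [← mul_pow]; norm_num
  rw [e, integral_const_mul, h]
  have e1 : (2 * (a : ℝ) + 1 + 1) / 2 = a + 1 := by ring
  have e2 : -(2 * (a : ℝ) + 1 + 1) / 2 = -((a + 1 : ℕ) : ℝ) := by push_cast; ring
  rw [e2, e1, Real.Gamma_nat_eq_factorial, Real.rpow_neg (by norm_num), Real.rpow_natCast]
  field_simp
  rw [pow_succ]; ring

lemma angular (k : ℤ) (hk : k ≠ 0) : ∫ t in Set.Ioo (-Real.pi) Real.pi, Complex.exp (k * Complex.I * t) = 0 := by
  rw [← integral_Ioc_eq_integral_Ioo, ← intervalIntegral.integral_of_le (by linarith [Real.pi_pos]),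
    integral_exp_mul_complex (by simp [hk])]
  have : Complex.exp (k * Complex.I * (Real.pi : ℝ)) = Complex.exp (k * Complex.I * ((-Real.pi : ℝ))) := by
    rw [Complex.exp_eq_exp_iff_exists_int]
    exact ⟨k, by push_cast; ring⟩
  rw [this, sub_self, zero_div]

lemma integral_mom (a b : ℕ) :
    ∫ z : ℂ, z ^ a * (starRingEnd ℂ z) ^ b ∂stdComplexGaussian = if a = b then (a.factorial : ℂ) else 0 := by
  unfold stdComplexGaussian
  rw [integral_map meas_scg.aemeasurable (by fun_prop), gaussianReal_of_var_ne_zero _ one_ne_zero,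
    prod_withDensity (measurable_gaussianPDF _ _) (measurable_gaussianPDF _ _),
    integral_withDensity_eq_integral_toReal_smul
      (by have := measurable_gaussianPDF 0 1; fun_prop)
      (ae_of_all _ fun x => ENNReal.mul_lt_top gaussianPDF_lt_top gaussianPDF_lt_top)]
  rw [← Measure.volume_eq_prod, ← integral_comp_polarCoord_symm, polarCoord_target]
  set A : ℝ → ℂ := fun r => (r * (r / Real.sqrt 2) ^ (a + b) * Real.exp (-r ^ 2 / 2) : ℝ) with hA
  have key : ∀ p : ℝ × ℝ, p ∈ Set.Ioi (0:ℝ) ×ˢ Set.Ioo (-Real.pi) Real.pi →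
      p.1 • (gaussianPDF 0 1 (polarCoord.symm p).1 * gaussianPDF 0 1 (polarCoord.symm p).2).toReal •
        ((((polarCoord.symm p).1 : ℂ) + (polarCoord.symm p).2 * Complex.I) / (Real.sqrt 2 : ℝ)) ^ a *
        ((starRingEnd ℂ) ((((polarCoord.symm p).1 : ℂ) + (polarCoord.symm p).2 * Complex.I) / (Real.sqrt 2 : ℝ))) ^ b
      = A p.1 * ((2 * Real.pi : ℝ)⁻¹ * Complex.exp (((a - b : ℤ) : ℂ) * Complex.I * p.2)) := by
    rintro ⟨r, t⟩ -
    simp only [polarCoord_symm_apply, ENNReal.toReal_mul, toReal_gaussianPDF, gaussianPDFReal, hA]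
    have e1 : (((r * Real.cos t : ℝ) : ℂ) + ((r * Real.sin t : ℝ) : ℂ) * Complex.I)
        = r * Complex.exp (t * Complex.I) := by
      rw [Complex.exp_mul_I]; push_cast; ring
    have e2 : (√(2 * Real.pi * ((1 : NNReal) : ℝ)))⁻¹ * Real.exp (-(r * Real.cos t - 0) ^ 2 / (2 * ((1 : NNReal) : ℝ))) *
        ((√(2 * Real.pi * ((1 : NNReal) : ℝ)))⁻¹ * Real.exp (-(r * Real.sin t - 0) ^ 2 / (2 * ((1 : NNReal) : ℝ))))
        = (2 * Real.pi)⁻¹ * Real.exp (-r ^ 2 / 2) := by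
      rw [mul_mul_mul_comm, ← Real.exp_add, ← mul_inv, Real.mul_self_sqrt (by positivity)]
      congr 2
      · simp
      · have := Real.sin_sq_add_cos_sq t
        simp only [NNReal.coe_one]
        linear_combination (-r^2/2) * this
    have e3 : (starRingEnd ℂ) (Complex.exp (t * Complex.I)) = Complex.exp (-(t * Complex.I)) := by
      rw [← Complex.exp_conj]; simp
    have e4 : Complex.exp (((a - b : ℤ) : ℂ) * Complex.I * t)
        = Complex.exp (t * Complex.I) ^ a * Complex.exp (-(t * Complex.I)) ^ b := by
      rw [← Complex.exp_nat_mul, ← Complex.exp_nat_mul, ← Complex.exp_add]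
      congr 1; push_cast; ring
    rw [e1, e2, e4]
    simp only [map_div₀, map_mul, Complex.conj_ofReal, e3, Complex.real_smul, mul_pow, div_pow, pow_add]
    push_cast
    ring
  rw [setIntegral_congr_fun (measurableSet_Ioi.prod measurableSet_Ioo)
    (g := fun p : ℝ × ℝ => A p.1 * ((2 * Real.pi : ℝ)⁻¹ * Complex.exp (((a - b : ℤ) : ℂ) * Complex.I * p.2)))]
  · rw [Measure.volume_eq_prod, setIntegral_prod_mul A (fun t : ℝ => ((2 * Real.pi : ℝ)⁻¹ * Complex.exp (((a - b : ℤ) : ℂ) * Complex.I * t) : ℂ)),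
      integral_const_mul]
    split_ifs with h
    · subst h
      have : ∫ x in Set.Ioi 0, A x = (a.factorial : ℂ) := by
        rw [hA]
        rw [integral_complex_ofReal, ← Complex.ofReal_natCast, ← radial]
        congr 1
        apply setIntegral_congr_fun measurableSet_Ioi
        intro r _
        simp only
        rw [← two_mul, pow_mul, div_pow, Real.sq_sqrt (by norm_num)]
      rw [this]
      have := Real.pi_pos
      simp only [sub_self, Int.cast_zero, zero_mul, Complex.exp_zero, integral_const, MeasurableSet.univ,
        measureReal_restrict_apply, Set.univ_inter, Real.volume_real_Ioo]
      rw [max_eq_left (by linarith)]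
      have hp : (Real.pi : ℂ) ≠ 0 := by exact_mod_cast this.ne'
      simp only [Complex.real_smul]
      push_cast
      field_simp
      ring
    · rw [angular _ (by omega), mul_zero, mul_zero]
  · intro p hp
    simp only
    rw [← key p hp]
    simp only [smul_mul_assoc]
end Gauss
end PPT

namespace PPT
section Wick
set_option linter.unusedSectionVars false
open Equiv Equiv.Perm Finset
variable {V : Type*} [Fintype V] [DecidableEq V]
variable {Q : Type*} [Fintype Q] [DecidableEq Q]

/-- product Gaussian measure -/
noncomputable def gm (Q : Type*) [Fintype Q] : Measure (Q → ℂ) := Measure.pi (fun _ : Q => stdComplexGaussian)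

instance : IsProbabilityMeasure (gm Q) := by unfold gm; infer_instance

lemma prod_fib {R : Type*} [CommMonoid R] (u : V → Q) (g : Q → R) :
    ∏ i, g (u i) = ∏ q, g q ^ Fintype.card {i // u i = q} := by
  rw [← Finset.prod_fiberwise (s := univ) (g := u)]
  apply Finset.prod_congr rfl
  intro q _
  rw [Finset.prod_congr rfl (g := fun _ => g q) (by intro i hi; rw [(mem_filter.1 hi).2]), prod_const,
    Fintype.card_subtype]

lemma card_match (u v : V → Q) :
    Fintype.card {α : Perm V // u = v ∘ α} =
      ∏ q, if Fintype.card {i // u i = q} = Fintype.card {i // v i = q}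
        then (Fintype.card {i // u i = q}).factorial else 0 := by
  by_cases h : ∀ q, Fintype.card {i // u i = q} = Fintype.card {i // v i = q}
  · simp only [h, if_true]
    rw [← DomMulAct.stabilizer_card]
    have e : ∀ q, Nonempty ({i // u i = q} ≃ {i // v i = q}) := fun q => Fintype.card_eq.1 (h q)
    have e := fun q => Classical.choice (e q)
    let β : Perm V := (Equiv.sigmaFiberEquiv u).symm.trans
      ((Equiv.sigmaCongrRight e).trans (Equiv.sigmaFiberEquiv v))
    have hβ : ∀ i, v (β i) = u i := fun i => (e (u i) ⟨i, rfl⟩).2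
    apply Fintype.card_congr
    refine ((Equiv.mulRight β⁻¹).subtypeEquiv ?_)
    intro α
    constructor
    · intro hh
      funext i
      have := congrFun hh (β⁻¹ i)
      simp only [Function.comp_apply] at this
      simp only [Equiv.coe_mulRight, Function.comp_apply, Perm.mul_apply, ← this, ← hβ]
      simp
    · intro hh
      funext i
      have := congrFun hh (β i)
      simp only [Equiv.coe_mulRight, Function.comp_apply, Perm.mul_apply, hβ] at this
      have e' : β⁻¹ (β i) = i := β.symm_apply_apply i
      rw [e'] at this
      exact this.symm
  · push Not at h
    obtain ⟨q, hq⟩ := h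
    rw [prod_eq_zero (mem_univ q) (by rw [if_neg hq])]
    rw [Fintype.card_eq_zero_iff]
    constructor
    rintro ⟨α, hα⟩
    apply hq
    apply Fintype.card_congr
    refine α.subtypeEquiv ?_
    intro i
    rw [hα]; rfl

lemma wick_aux (u v : V → Q) (g : Q → ℂ) :
    ∏ i, g (u i) * starRingEnd ℂ (g (v i)) =
    ∏ q, (g q ^ Fintype.card {i // u i = q} * (starRingEnd ℂ (g q)) ^ Fintype.card {i // v i = q}) := by
  rw [Finset.prod_mul_distrib, Finset.prod_mul_distrib, prod_fib u g,
    prod_fib v (fun q => starRingEnd ℂ (g q))]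

lemma wick_int (u v : V → Q) :
    Integrable (fun g : Q → ℂ => ∏ i, g (u i) * starRingEnd ℂ (g (v i))) (gm Q) := by
  simp only [wick_aux u v]
  exact Integrable.fintype_prod (f := fun q z => z ^ Fintype.card {i // u i = q} * (starRingEnd ℂ z) ^ Fintype.card {i // v i = q})
    fun q => integrable_mom _ _

lemma wick (u v : V → Q) :
    ∫ g : Q → ℂ, ∏ i, g (u i) * starRingEnd ℂ (g (v i)) ∂gm Q = Fintype.card {α : Perm V // u = v ∘ α} := by
  simp only [wick_aux u v]
  unfold gm
  rw [integral_fintype_prod_eq_prod (f := fun q z => z ^ Fintype.card {i // u i = q} * (starRingEnd ℂ z) ^ Fintype.card {i // v i = q}),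
    card_match]
  simp only [integral_mom]
  push_cast
  rfl

/-- centred expansion -/
lemma cw_expand (u v : V → Q) (g : Q → ℂ) :
    ∏ i, (g (u i) * starRingEnd ℂ (g (v i)) - if u i = v i then 1 else 0) =
    ∑ T : Finset V, ((-1) ^ T.card * (∏ i ∈ T, if u i = v i then (1:ℂ) else 0)) *
      ∏ i : {i // i ∉ T}, g (u i) * starRingEnd ℂ (g (v i)) := by
  rw [Finset.prod_sub, powerset_univ]
  apply sum_congr rfl
  intro T _
  rw [mul_right_comm]
  congr 1
  rw [← Finset.compl_eq_univ_sdiff]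
  symm
  exact Finset.prod_subtype (p := fun i => i ∉ T) Tᶜ (by simp) (fun i => g (u i) * starRingEnd ℂ (g (v i))) |>.symm

lemma cw_int (u v : V → Q) :
    Integrable (fun g : Q → ℂ => ∏ i, (g (u i) * starRingEnd ℂ (g (v i)) - if u i = v i then 1 else 0)) (gm Q) := by
  simp only [cw_expand]
  apply integrable_finsetSum
  intro T _
  exact (wick_int (V := {i // i ∉ T}) (fun i => u i) (fun i => v i)).const_mul _

lemma card_ext (u v : V → Q) (T : Finset V) (h : ∀ i ∈ T, u i = v i) :
    Fintype.card {α : Perm {i // i ∉ T} // (fun i : {i // i ∉ T} => u i) = (fun i : {i // i ∉ T} => v i) ∘ α}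
    = (univ.filter fun α : Perm V => u = v ∘ α ∧ ∀ i ∈ T, α i = i).card := by
  rw [← Fintype.card_subtype]
  apply Fintype.card_congr
  refine ((Equiv.Perm.subtypeEquivSubtypePerm (fun i => i ∉ T)).subtypeEquiv (q := fun a => u = v ∘ a.1) ?_).trans ?_
  · intro α
    constructor
    · intro hh
      funext i
      by_cases hi : i ∈ T
      · simp only [Function.comp_apply]
        rw [Equiv.Perm.subtypeEquivSubtypePerm_apply_of_not_mem (p := fun i => i ∉ T) _ (by simpa using hi), h i hi]
      · simp only [Function.comp_apply]
        rw [Equiv.Perm.subtypeEquivSubtypePerm_apply_of_mem (p := fun i => i ∉ T) _ hi]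
        exact congrFun hh ⟨i, hi⟩
    · intro hh
      funext i
      have := congrFun hh i
      simp only [Function.comp_apply] at this
      rw [Equiv.Perm.subtypeEquivSubtypePerm_apply_of_mem (p := fun i => i ∉ T) _ i.2] at this
      exact this
  · refine (Equiv.subtypeSubtypeEquivSubtypeInter _ (fun a : Perm V => u = v ∘ a)).trans (Equiv.subtypeEquivRight ?_)
    intro a
    simp only [not_not]
    exact and_comm

lemma cw (u v : V → Q) :
    ∫ g : Q → ℂ, ∏ i, (g (u i) * starRingEnd ℂ (g (v i)) - if u i = v i then 1 else 0) ∂gm Q =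
      ((Der V).filter fun α : Perm V => u = v ∘ α).card := by
  simp only [cw_expand]
  rw [integral_finsetSum _ (by
    intro T _
    exact (wick_int (V := {i // i ∉ T}) (fun i => u i) (fun i => v i)).const_mul _)]
  simp only [integral_const_mul]
  have key : ∀ T : Finset V, ((-1) ^ T.card * (∏ i ∈ T, if u i = v i then (1:ℂ) else 0)) *
      ∫ g : Q → ℂ, ∏ i : {i // i ∉ T}, g (u i) * starRingEnd ℂ (g (v i)) ∂gm Q
      = ∑ α ∈ univ.filter (fun α : Perm V => u = v ∘ α), if (∀ i ∈ T, α i = i) then (-1) ^ T.card else 0 := by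
    intro T
    rw [wick (V := {i // i ∉ T}) (fun i => u i) (fun i => v i)]
    by_cases h : ∀ i ∈ T, u i = v i
    · rw [card_ext u v T h, Finset.prod_congr rfl (g := fun _ => (1:ℂ)) (by intro i hi; rw [if_pos (h i hi)])]
      rw [← sum_filter, filter_filter]
      simp [mul_comm]
    · push Not at h
      obtain ⟨i, hi, hne⟩ := h
      rw [prod_eq_zero hi (by rw [if_neg hne])]
      symm
      rw [mul_zero, zero_mul]
      apply sum_eq_zero
      intro α hα
      rw [if_neg]
      intro hh
      apply hne
      have := congrFun (mem_filter.1 hα).2 i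
      rw [this, Function.comp_apply, hh i hi]
  simp only [key]
  rw [sum_comm]
  have k2 : ∀ α : Perm V, (∑ T : Finset V, if (∀ i ∈ T, α i = i) then (-1 : ℂ) ^ T.card else 0)
      = if α ∈ Der V then 1 else 0 := by
    intro α
    rw [← sum_filter]
    have : (univ.filter fun T : Finset V => ∀ i ∈ T, α i = i) = (univ.filter fun i => α i = i).powerset := by
      ext T
      simp [subset_iff]
    rw [this]
    have h := Finset.sum_powerset_neg_one_pow_card (x := univ.filter fun i => α i = i)
    have h' := congrArg (Int.cast : ℤ → ℂ) h
    push_cast at h'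
    rw [h']
    simp [mem_Der, filter_eq_empty_iff]
  simp only [k2]
  rw [← sum_filter, filter_filter]
  simp only [sum_const, nsmul_eq_mul, mul_one]
  congr 2
  ext α; simp [and_comm]

end Wick
end PPT

namespace PPT
section Traces
set_option linter.unusedSectionVars false
open Equiv Equiv.Perm Finset
variable {V : Type*} [Fintype V] [DecidableEq V]
variable {V' : Type*} [Fintype V'] [DecidableEq V']
variable {ι : Type*} [Fintype ι] [DecidableEq ι]

lemma card_fix (F : Type*) [Fintype F] [DecidableEq F] (σ : Perm V) :
    (univ.filter fun x : V → F => ∀ i, x i = x (σ i)).card = Fintype.card F ^ cyc σ := by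
  have hc : Fintype.card (cycs σ → F) = Fintype.card F ^ cyc σ := by
    rw [Fintype.card_fun, Fintype.card_coe]; rfl
  rw [← hc, ← Fintype.card_subtype]
  have inv : ∀ x : V → F, (∀ i, x i = x (σ i)) → ∀ i j, j ∈ orb σ i → x j = x i := by
    intro x hx i j hj
    have := orb_subset (σ := σ) (S := univ.filter fun z => x z = x i) (x := i) (by
      intro z hz
      simp only [mem_filter, mem_univ, true_and] at hz ⊢
      rw [← hx z, hz]) (by simp)
    have := this hj
    simpa using this
  symm
  refine Fintype.card_congr ⟨fun h => ⟨fun i => h ⟨orb σ i, orb_mem_cycs σ i⟩, ?_⟩,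
    fun x C => x.1 (mem_cycs.1 C.2).choose, ?_, ?_⟩
  · intro i
    apply congrArg h
    apply Subtype.ext
    exact orb_eq_iff.2 ((sameCycle_apply_right (f := σ)).2 (SameCycle.refl _ _))
  · intro h
    funext C
    simp only
    congr 1
    apply Subtype.ext
    exact (mem_cycs.1 C.2).choose_spec
  · rintro ⟨x, hx⟩
    apply Subtype.ext
    funext i
    simp only
    apply inv x hx
    have := (mem_cycs.1 (orb_mem_cycs σ i)).choose_spec
    exact mem_orb.2 (orb_eq_iff.1 this).symm

/-- Generalised trace along a permutation. -/
def trg {R : Type*} [CommRing R] (γ : Perm V) (M : Matrix ι ι R) : R := ∑ w : V → ι, ∏ v, M (w v) (w (γ v))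

lemma trg_sum {R : Type*} [CommRing R] (γ : Perm V) (γ' : Perm V') (M : Matrix ι ι R) :
    trg (Equiv.Perm.sumCongr γ γ') M = trg γ M * trg γ' M := by
  unfold trg
  rw [← (Equiv.sumArrowEquivProdArrow V V' ι).symm.sum_comp, Fintype.sum_prod_type, sum_mul_sum]
  apply sum_congr rfl
  intro a _
  apply sum_congr rfl
  intro b _
  rw [Fintype.prod_sum_type]
  rfl

lemma pow_entry {R : Type*} [CommRing R] (M : Matrix ι ι R) (k : ℕ) (a b : ι) :
    (M ^ (k + 1)) a b = ∑ w : Fin k → ι, ∏ i : Fin (k + 1),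
      M (Fin.cons (α := fun _ => ι) a w i) (Fin.snoc (α := fun _ => ι) w b i) := by
  induction k generalizing a with
  | zero => simp [Fin.snoc]
  | succ k ih =>
    rw [pow_succ', Matrix.mul_apply]
    simp only [ih]
    rw [← (Fin.consEquiv (fun _ : Fin (k + 1) => ι)).sum_comp, Fintype.sum_prod_type]
    apply sum_congr rfl
    intro c _
    rw [mul_sum]
    apply sum_congr rfl
    intro w _
    rw [Fin.prod_univ_succ (n := k + 1)]
    simp only [Fin.consEquiv, Equiv.coe_fn_mk]
    rw [← Fin.cons_snoc_eq_snoc_cons]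
    simp only [Fin.cons_zero, Fin.cons_succ]

lemma trace_pow {R : Type*} [CommRing R] (M : Matrix ι ι R) (k : ℕ) :
    (M ^ (k + 1)).trace = trg (finRotate (k + 1)) M := by
  unfold trg Matrix.trace
  rw [← (Fin.consEquiv (fun _ : Fin (k + 1) => ι)).sum_comp, Fintype.sum_prod_type]
  apply sum_congr rfl
  intro a _
  rw [Matrix.diag_apply, pow_entry]
  apply sum_congr rfl
  intro w _
  rw [Fin.snoc_eq_cons_rotate]
  rfl

lemma sameCycle_finRotate (k : ℕ) (x y : Fin (k + 1)) : (finRotate (k + 1)).SameCycle x y := by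
  rcases k with _ | k
  · have : x = y := by omega
    rw [this]
  · refine (isCycle_finRotate (n := k)).sameCycle ?_ ?_
    · rw [← mem_support, support_finRotate]; simp
    · rw [← mem_support, support_finRotate]; simp

lemma cycs_of_trans [Nonempty V] (γ : Perm V) (h : ∀ x y, γ.SameCycle x y) : cycs γ = {univ} := by
  have : ∀ x, orb γ x = univ := fun x => by ext y; simp [mem_orb, h x y]
  ext C
  rw [mem_cycs]
  simp only [this, mem_singleton, eq_comm]
  constructor
  · rintro ⟨_, h⟩; exact h
  · intro h; exact ⟨Classical.arbitrary V, h⟩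

lemma sumCongr_pow_inl (γ : Perm V) (γ' : Perm V') (i : ℕ) (x : V) :
    ((Equiv.Perm.sumCongr γ γ') ^ i) (Sum.inl x) = Sum.inl ((γ ^ i) x) := by
  induction i with
  | zero => rfl
  | succ i ih => rw [pow_succ', pow_succ', Perm.mul_apply, ih]; rfl

lemma sumCongr_pow_inr (γ : Perm V) (γ' : Perm V') (i : ℕ) (x : V') :
    ((Equiv.Perm.sumCongr γ γ') ^ i) (Sum.inr x) = Sum.inr ((γ' ^ i) x) := by
  induction i with
  | zero => rfl
  | succ i ih => rw [pow_succ', pow_succ', Perm.mul_apply, ih]; rfl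

lemma cycs_sum [Nonempty V] [Nonempty V'] (γ : Perm V) (γ' : Perm V') (h : ∀ x y, γ.SameCycle x y)
    (h' : ∀ x y, γ'.SameCycle x y) : cycs (Equiv.Perm.sumCongr γ γ') =
      {univ.map Function.Embedding.inl, univ.map Function.Embedding.inr} := by
  have h1 : ∀ x, orb (Equiv.Perm.sumCongr γ γ') (Sum.inl x) = univ.map Function.Embedding.inl := by
    intro x
    ext y
    rw [mem_orb]
    rcases y with y | y
    · simp only [Finset.mem_map, mem_univ, true_and, Function.Embedding.inl_apply, Sum.inl.injEq, exists_eq, iff_true]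
      obtain ⟨i, hi⟩ := (h x y).exists_nat_pow_eq
      exact ⟨i, by rw [zpow_natCast, sumCongr_pow_inl, hi]⟩
    · simp only [Finset.mem_map, mem_univ, true_and, Function.Embedding.inl_apply, reduceCtorEq, exists_false, iff_false]
      intro hh
      obtain ⟨i, hi⟩ := hh.exists_nat_pow_eq
      rw [sumCongr_pow_inl] at hi
      cases hi
  have h2 : ∀ x, orb (Equiv.Perm.sumCongr γ γ') (Sum.inr x) = univ.map Function.Embedding.inr := by
    intro x
    ext y
    rw [mem_orb]
    rcases y with y | y
    · simp only [Finset.mem_map, mem_univ, true_and, Function.Embedding.inr_apply, reduceCtorEq, exists_false, iff_false]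
      intro hh
      obtain ⟨i, hi⟩ := hh.exists_nat_pow_eq
      rw [sumCongr_pow_inr] at hi
      cases hi
    · simp only [Finset.mem_map, mem_univ, true_and, Function.Embedding.inr_apply, Sum.inr.injEq, exists_eq, iff_true]
      obtain ⟨i, hi⟩ := (h' x y).exists_nat_pow_eq
      exact ⟨i, by rw [zpow_natCast, sumCongr_pow_inr, hi]⟩
  ext C
  rw [mem_cycs]
  simp only [Sum.exists, h1, h2, mem_insert, mem_singleton, eq_comm]
  simp

lemma inl_ne_inr [Nonempty V] :
    (univ.map Function.Embedding.inl : Finset (V ⊕ V')) ≠ univ.map Function.Embedding.inr := by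
  intro hh
  have := congrArg (fun s => Sum.inl (Classical.arbitrary V) ∈ s) hh
  simp at this

variable {n s : ℕ}

/-- Unnormalised centred partially transposed Wishart matrix. -/
noncomputable def MM (g : (Fin n × Fin n) × Fin s → ℂ) : Matrix (Fin n × Fin n) (Fin n × Fin n) ℂ :=
  partialTranspose ((Matrix.of fun a k => g (a, k)) * (Matrix.of fun a k => g (a, k))ᴴ) - (s : ℂ) • 1

lemma MM_apply (g : (Fin n × Fin n) × Fin s → ℂ) (p q : Fin n × Fin n) :
    MM g p q = ∑ k : Fin s, (g ((p.1, q.2), k) * starRingEnd ℂ (g ((q.1, p.2), k)) -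
      if ((p.1, q.2), k) = ((q.1, p.2), k) then 1 else 0) := by
  have : ∀ k : Fin s, (((p.1, q.2), k) = ((q.1, p.2), k)) ↔ p = q := by
    intro k
    simp only [and_true, Prod.ext_iff]
    exact ⟨fun h => ⟨h.1, h.2.symm⟩, fun h => ⟨h.1, h.2.symm⟩⟩
  simp only [this]
  rw [sum_sub_distrib]
  simp [MM, partialTranspose, Matrix.mul_apply, Matrix.one_apply]

/-- index maps -/
def uu (γ : Perm V) (w : V → Fin n × Fin n) (k : V → Fin s) (v : V) : (Fin n × Fin n) × Fin s :=
  (((w v).1, (w (γ v)).2), k v)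
def vv (γ : Perm V) (w : V → Fin n × Fin n) (k : V → Fin s) (v : V) : (Fin n × Fin n) × Fin s :=
  (((w (γ v)).1, (w v).2), k v)

lemma trg_MM (γ : Perm V) (g : (Fin n × Fin n) × Fin s → ℂ) :
    trg γ (MM g) = ∑ w : V → Fin n × Fin n, ∑ k : V → Fin s,
      ∏ i, (g (uu γ w k i) * starRingEnd ℂ (g (vv γ w k i)) - if uu γ w k i = vv γ w k i then 1 else 0) := by
  unfold trg
  simp only [MM_apply]
  apply sum_congr rfl
  intro w _
  rw [Finset.prod_univ_sum, Fintype.piFinset_univ]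
  rfl

lemma trg_int (γ : Perm V) : Integrable (fun g : (Fin n × Fin n) × Fin s → ℂ => trg γ (MM g)) (gm _) := by
  simp only [trg_MM]
  exact integrable_finsetSum _ fun w _ => integrable_finsetSum _ fun k _ => cw_int _ _

lemma trg_mean (γ : Perm V) :
    ∫ g : (Fin n × Fin n) × Fin s → ℂ, trg γ (MM g) ∂(gm _) = (psi γ s n : ℝ) := by
  simp only [trg_MM]
  rw [integral_finsetSum _ fun w _ => integrable_finsetSum _ fun k _ => cw_int _ _]
  simp only [integral_finsetSum _ fun k _ => cw_int _ _, cw]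
  unfold psi
  simp only [card_filter]
  push_cast
  simp only [sum_comm (t := Der V)]
  apply sum_congr rfl
  intro α _
  have e1 := card_fix (Fin s) α
  have e2 := card_fix (Fin n) (α * γ⁻¹)
  have e3 := card_fix (Fin n) (γ * α)
  rw [cyc_mul_comm] at e2
  simp only [Fintype.card_fin] at e1 e2 e3
  have : ((s : ℂ) ^ cyc α * (n : ℂ) ^ (cyc (γ⁻¹ * α) + cyc (γ * α))) = 
     (((s ^ cyc α) * ((n ^ (cyc (γ⁻¹ * α)) * n ^ (cyc (γ * α)))) : ℕ) : ℂ) := by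
    push_cast; rw [pow_add]
  rw [this, ← e1, ← e2, ← e3]
  simp only [card_filter]
  simp only [Nat.cast_mul, Nat.cast_sum, Nat.cast_ite, Nat.cast_one, Nat.cast_zero]
  rw [← (Equiv.arrowProdEquivProdArrow V (fun _ => Fin n) (fun _ => Fin n)).symm.sum_comp, Fintype.sum_prod_type]
  have key : ∀ (x y : V → Fin n) (k : V → Fin s),
      (if uu γ ((Equiv.arrowProdEquivProdArrow V (fun _ => Fin n) (fun _ => Fin n)).symm (x, y)) k =
        vv γ ((Equiv.arrowProdEquivProdArrow V (fun _ => Fin n) (fun _ => Fin n)).symm (x, y)) k ∘ α then (1 : ℂ) else 0)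
      = (if ∀ i, k i = k (α i) then 1 else 0) * ((if ∀ i, y i = y ((α * γ⁻¹) i) then 1 else 0) *
        (if ∀ i, x i = x ((γ * α) i) then 1 else 0)) := by
    intro x y k
    rw [ite_zero_mul_ite_zero, ite_zero_mul_ite_zero, mul_one, mul_one]
    refine if_congr ?_ rfl rfl
    constructor
    · intro h
      have h' := fun i => congrFun h i
      simp only [uu, vv, Function.comp_apply, Prod.mk.injEq] at h'
      refine ⟨fun i => (h' i).2, fun i => ?_, fun i => (h' i).1.1⟩
      have := (h' (γ⁻¹ i)).1.2
      simp only [Equiv.arrowProdEquivProdArrow, Equiv.coe_fn_symm_mk] at this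
      have e : γ (γ⁻¹ i) = i := γ.apply_symm_apply i
      rw [e] at this
      exact this
    · rintro ⟨h1, h2, h3⟩
      funext i
      simp only [uu, vv, Function.comp_apply, Prod.mk.injEq]
      refine ⟨⟨h3 i, ?_⟩, h1 i⟩
      have := h2 (γ i)
      have e : γ⁻¹ (γ i) = i := γ.symm_apply_apply i
      rw [Perm.mul_apply, e] at this
      exact this
  simp only [key]
  simp only [← mul_sum, ← sum_mul]
end Traces
end PPT

namespace PPT
section Herm
set_option linter.unusedSectionVars false
variable {ι : Type*} [Fintype ι] [DecidableEq ι]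

lemma herm_trace_im {A : Matrix ι ι ℂ} (h : A.IsHermitian) : A.trace.im = 0 := by
  have : star A.trace = A.trace := by rw [← trace_conjTranspose, h.eq]
  exact Complex.conj_eq_iff_im.1 this

lemma trace_shift_pow {H : Matrix ι ι ℂ} (h : H.IsHermitian) (s : ℝ) (p : ℕ) :
    ((H - (s : ℂ) • 1) ^ p).trace = ((∑ i, (h.eigenvalues i - s) ^ p : ℝ) : ℂ) := by
  set φ := Unitary.conjStarAlgAut ℂ (Matrix ι ι ℂ) h.eigenvectorUnitary with hφ
  have e : H - (s : ℂ) • 1 = φ (diagonal (fun i => ((h.eigenvalues i - s : ℝ) : ℂ))) := by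
    have e1 : (diagonal (fun i => ((h.eigenvalues i - s : ℝ) : ℂ)) : Matrix ι ι ℂ)
        = diagonal (RCLike.ofReal ∘ h.eigenvalues) - (s : ℂ) • 1 := by
      rw [Matrix.smul_one_eq_diagonal, Matrix.diagonal_sub]
      congr 1; funext i; simp
    rw [e1, map_sub, map_smul, map_one, ← h.spectral_theorem]
  rw [e, ← map_pow, Matrix.diagonal_pow, hφ, Unitary.conjStarAlgAut_apply, Matrix.trace_mul_cycle,
    Unitary.coe_star_mul_self, one_mul, Matrix.trace_diagonal]
  simp

lemma not_psd_trace {M : Matrix ι ι ℂ} (hM : M.IsHermitian) {s : ℝ} (hs : 0 ≤ s)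
    (h : ¬ (M + (s : ℂ) • 1).PosSemidef) (m : ℕ) : s ^ (2 * m) ≤ (M ^ (2 * m)).trace.re := by
  have hH : (M + (s : ℂ) • 1).IsHermitian := by
    refine hM.add ?_
    unfold Matrix.IsHermitian
    rw [conjTranspose_smul, conjTranspose_one]; simp
  have e := trace_shift_pow hH s (2 * m)
  rw [add_sub_cancel_right] at e
  rw [e, Complex.ofReal_re]
  rw [hH.posSemidef_iff_eigenvalues_nonneg] at h
  simp only [Pi.le_def, not_forall, not_le, Pi.zero_apply] at h
  obtain ⟨i, hi⟩ := h
  calc s ^ (2 * m) ≤ (hH.eigenvalues i - s) ^ (2 * m) := by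
        rw [← Even.neg_pow (even_two_mul m) (hH.eigenvalues i - s)]
        apply pow_le_pow_left₀ hs
        linarith
    _ ≤ _ := by
        apply Finset.single_le_sum (f := fun i => (hH.eigenvalues i - s) ^ (2 * m)) _ (Finset.mem_univ i)
        intro j _
        exact Even.pow_nonneg (even_two_mul m) _

lemma trace_even_nonneg {M : Matrix ι ι ℂ} (hM : M.IsHermitian) (m : ℕ) :
    0 ≤ (M ^ (2 * m)).trace.re := by
  have h := (posSemidef_conjTranspose_mul_self (M ^ m)).trace_nonneg
  rw [(hM.pow m).eq, ← pow_add, ← two_mul] at h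
  exact (Complex.le_def.1 h).1

lemma herm_smul_one (a : ℝ) : ((a : ℂ) • (1 : Matrix ι ι ℂ)).IsHermitian := by
  unfold Matrix.IsHermitian
  rw [conjTranspose_smul, conjTranspose_one]; simp

lemma psd_poly {M : Matrix ι ι ℂ} (hM : M.IsHermitian) {s a b : ℝ}
    (h : (M + (s : ℂ) • 1).PosSemidef) (hb : s ≤ a * b) (K : ℕ) :
    0 ≤ (M ^ (2 * K + 5)).trace.re + (a - 4) * b * (M ^ (2 * K + 4)).trace.re
      + (4 - 4 * a) * b ^ 2 * (M ^ (2 * K + 3)).trace.re + 4 * a * b ^ 3 * (M ^ (2 * K + 2)).trace.re := by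
  have h1 : (M + ((a * b : ℝ) : ℂ) • 1).PosSemidef := by
    have h2 : (((a * b - s : ℝ) : ℂ) • (1 : Matrix ι ι ℂ)).PosSemidef :=
      PosSemidef.one.smul (by rw [Complex.zero_le_real]; linarith)
    have := h.add h2
    have e : M + (s : ℂ) • 1 + (((a * b - s : ℝ) : ℂ) • (1 : Matrix ι ι ℂ)) = M + ((a * b : ℝ) : ℂ) • 1 := by
      rw [add_assoc, ← add_smul]; congr 2; push_cast; ring
    rwa [e] at this
  set B := M ^ (K + 1) * (M - ((2 * b : ℝ) : ℂ) • 1) with hB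
  have hBh : Bᴴ = B := by
    rw [hB, conjTranspose_mul, (hM.pow _).eq, (hM.sub (herm_smul_one _)).eq]
    have : Commute (M ^ (K + 1)) (M - ((2 * b : ℝ) : ℂ) • 1) := by
      apply Commute.sub_right
      · exact (Commute.refl M).pow_left _
      · exact (Commute.one_right _).smul_right _
    exact this.eq.symm
  have h3 := (h1.conjTranspose_mul_mul_same B).trace_nonneg
  rw [hBh] at h3
  have e : B * (M + ((a * b : ℝ) : ℂ) • 1) * B = M ^ (2 * K + 5) + (((a - 4) * b : ℝ) : ℂ) • M ^ (2 * K + 4)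
      + (((4 - 4 * a) * b ^ 2 : ℝ) : ℂ) • M ^ (2 * K + 3) + ((4 * a * b ^ 3 : ℝ) : ℂ) • M ^ (2 * K + 2) := by
    have hp : (Polynomial.aeval M) ((Polynomial.X ^ (K + 1) * (Polynomial.X - Polynomial.C ((2 * b : ℝ) : ℂ))) *
        (Polynomial.X + Polynomial.C ((a * b : ℝ) : ℂ)) *
        (Polynomial.X ^ (K + 1) * (Polynomial.X - Polynomial.C ((2 * b : ℝ) : ℂ)))) =
        B * (M + ((a * b : ℝ) : ℂ) • 1) * B := by
      simp only [map_mul, map_pow, map_sub, map_add, Polynomial.aeval_X, Polynomial.aeval_C,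
        Algebra.algebraMap_eq_smul_one, hB]
    rw [← hp]
    have : ((Polynomial.X ^ (K + 1) * (Polynomial.X - Polynomial.C ((2 * b : ℝ) : ℂ))) *
        (Polynomial.X + Polynomial.C ((a * b : ℝ) : ℂ)) *
        (Polynomial.X ^ (K + 1) * (Polynomial.X - Polynomial.C ((2 * b : ℝ) : ℂ)))) =
        Polynomial.X ^ (2 * K + 5) + Polynomial.C (((a - 4) * b : ℝ) : ℂ) * Polynomial.X ^ (2 * K + 4)
        + Polynomial.C (((4 - 4 * a) * b ^ 2 : ℝ) : ℂ) * Polynomial.X ^ (2 * K + 3)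
        + Polynomial.C ((4 * a * b ^ 3 : ℝ) : ℂ) * Polynomial.X ^ (2 * K + 2) := by
      push_cast
      simp only [map_mul, map_sub, map_pow, Polynomial.C_ofNat]
      ring
    rw [this]
    simp only [map_mul, map_pow, map_add, Polynomial.aeval_X, Polynomial.aeval_C,
      Algebra.algebraMap_eq_smul_one, smul_mul_assoc, one_mul]
  rw [e] at h3
  have h4 := (Complex.le_def.1 h3).1
  simp only [trace_add, trace_smul, smul_eq_mul, Complex.add_re, Complex.re_ofReal_mul, Complex.zero_re] at h4
  exact h4

variable {n s : ℕ}

/-- The PPT event, as a predicate on the entries. -/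
def PEv (g : (Fin n × Fin n) × Fin s → ℂ) : Prop :=
  (partialTranspose ((((Matrix.of fun a k => g (a, k)) * (Matrix.of fun a k => g (a, k))ᴴ).trace)⁻¹ •
    ((Matrix.of fun a k => g (a, k)) * (Matrix.of fun a k => g (a, k))ᴴ))).PosSemidef

lemma pt_smul (c : ℂ) (A : Matrix (Fin n × Fin n) (Fin n × Fin n) ℂ) :
    partialTranspose (c • A) = c • partialTranspose A := by
  ext p q; simp [partialTranspose]

lemma MM_add (g : (Fin n × Fin n) × Fin s → ℂ) :
    MM g + ((s : ℝ) : ℂ) • 1 = partialTranspose ((Matrix.of fun a k => g (a, k)) * (Matrix.of fun a k => g (a, k))ᴴ) := by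
  unfold MM; simp

lemma PEv_iff (g : (Fin n × Fin n) × Fin s → ℂ) : PEv g ↔ (MM g + ((s : ℝ) : ℂ) • 1).PosSemidef := by
  rw [MM_add]
  unfold PEv
  set G : Matrix (Fin n × Fin n) (Fin s) ℂ := Matrix.of fun a k => g (a, k)
  have ht := (posSemidef_self_mul_conjTranspose G).trace_nonneg
  rw [pt_smul]
  by_cases h0 : (G * Gᴴ).trace = 0
  · rw [trace_mul_conjTranspose_self_eq_zero_iff] at h0
    rw [h0]
    have : partialTranspose ((0 : Matrix (Fin n × Fin n) (Fin s) ℂ) * (0 : Matrix (Fin n × Fin n) (Fin s) ℂ)ᴴ) = 0 := by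
      ext p q; simp [partialTranspose]
    rw [this, smul_zero]
  · constructor
    · intro h
      have := h.smul ht
      rwa [smul_smul, mul_inv_cancel₀ h0, one_smul] at this
    · intro h
      exact h.smul (inv_nonneg.2 ht)

lemma MM_herm (g : (Fin n × Fin n) × Fin s → ℂ) : (MM g).IsHermitian := by
  unfold MM
  refine IsHermitian.sub ?_ (by exact_mod_cast herm_smul_one (s : ℝ))
  ext p q
  simp [partialTranspose, Matrix.mul_apply, mul_comm]
end Herm
end PPT

namespace PPT
section Asym
open Equiv Equiv.Perm Finset

lemma cyc_finRotate (k : ℕ) : cyc (finRotate (k + 1)) = 1 := by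
  unfold cyc
  rw [cycs_of_trans _ (sameCycle_finRotate k), card_singleton]

lemma exists_eps {a : ℝ} (ha : 2 < a) : ∃ ε : ℝ, 0 < ε ∧ ε < 1 ∧ 2 * (1 + ε) / (1 - ε) ≤ a * (1 - ε) ^ 2 := by
  have hc : ContinuousAt (fun ε : ℝ => a * (1 - ε) ^ 2 - 2 * (1 + ε) / (1 - ε)) 0 := by
    apply ContinuousAt.sub
    · fun_prop
    · apply ContinuousAt.div
      · fun_prop
      · fun_prop
      · norm_num
  have h0 : (0 : ℝ) < (fun ε : ℝ => a * (1 - ε) ^ 2 - 2 * (1 + ε) / (1 - ε)) 0 := by norm_num; linarith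
  have h1 := hc.eventually (lt_mem_nhds h0)
  have h2 : ∀ᶠ ε : ℝ in nhds 0, ε < 1 := gt_mem_nhds (by norm_num)
  have h3 := ((h1.and h2).filter_mono (nhdsWithin_le_nhds (s := Set.Ioi 0))).and self_mem_nhdsWithin
  obtain ⟨ε, ⟨⟨h4, h5⟩, h6⟩⟩ := h3.exists
  exact ⟨ε, h6, h5, by linarith⟩

lemma log_small (A B : ℝ) {δ : ℝ} (hδ : 0 < δ) : ∀ᶠ n : ℕ in atTop, A * Real.log n + B ≤ (n : ℝ) ^ δ := by
  have h1 := (isLittleO_log_rpow_atTop hδ)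
  have h2 : (fun _ : ℝ => B) =o[atTop] (fun x : ℝ => x ^ δ) := by
    rw [Asymptotics.isLittleO_const_left]
    right
    exact tendsto_norm_atTop_atTop.comp (tendsto_rpow_atTop hδ)
  have h3 := (h1.const_mul_left A).add h2
  have h4 := (h3.def (c := 1) one_pos).and (eventually_ge_atTop 0)
  have h5 := tendsto_natCast_atTop_atTop (R := ℝ) |>.eventually h4
  filter_upwards [h5] with n hn
  have := hn.1
  rw [one_mul, Real.norm_of_nonneg (Real.rpow_nonneg hn.2 _)] at this
  exact (le_abs_self _).trans this

theorem upper_asym {c : ℝ} (hc : 4 < c) (s : ℕ → ℕ)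
    (hsc : Tendsto (fun n : ℕ => (s n : ℝ) / (n ^ 2)) atTop (nhds c)) :
    ∃ m : ℕ → ℕ, Tendsto (fun n : ℕ => psi (finRotate (2 * m n + 1 + 1)) (s n) n / (s n : ℝ) ^ (2 * m n + 1 + 1))
      atTop (nhds 0) := by
  obtain ⟨a, ha, hac⟩ : ∃ a : ℝ, 2 < a ∧ a ^ 2 < c := by
    have : (2 : ℝ) < Real.sqrt c := by
      rw [Real.lt_sqrt (by norm_num)]; linarith
    obtain ⟨a, h1, h2⟩ := exists_between this
    exact ⟨a, h1, (Real.lt_sqrt (by linarith)).1 h2⟩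
  obtain ⟨ε, hε, hε1, hK⟩ := exists_eps ha
  set θ := 1 - ε with hθ
  have hθ0 : 0 < θ := by linarith
  have hθ1 : θ < 1 := by linarith
  have hlog : Real.log θ < 0 := Real.log_neg hθ0 hθ1
  set L := (-Real.log θ)⁻¹ with hL
  have hL0 : 0 < L := by rw [hL]; apply inv_pos.2; linarith
  have hLθ : L * Real.log θ = -1 := by
    rw [hL]
    have := hlog.ne
    field_simp
  let m : ℕ → ℕ := fun n => ⌈L * Real.log n⌉₊
  refine ⟨m, ?_⟩
  have hx : Tendsto (fun n : ℕ => (n : ℝ) ^ (1 / 40 : ℝ)) atTop atTop :=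
    (tendsto_rpow_atTop (by norm_num)).comp tendsto_natCast_atTop_atTop
  have hup : ∀ᶠ n : ℕ in atTop, psi (finRotate (2 * m n + 1 + 1)) (s n) n / (s n : ℝ) ^ (2 * m n + 1 + 1)
      ≤ (2 * Real.exp 1) * ((n : ℝ) ^ 2)⁻¹ := by
    filter_upwards [log_small (2 * L) 5 (δ := 1 / 40) (by norm_num), hx.eventually_ge_atTop 1,
      hx.eventually_ge_atTop (512 * (θ ^ 4)⁻¹ / ε ^ 2 / (ε / 2)), eventually_ge_atTop 1,
      hsc.eventually (lt_mem_nhds hac)] with n hp hx1 hx2 hn1 hsn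
    set x := (n : ℝ) ^ (1 / 40 : ℝ) with hxd
    have hn0 : (0 : ℝ) < n := by exact_mod_cast hn1
    have hn1' : (1 : ℝ) ≤ n := by exact_mod_cast hn1
    have hx40 : x ^ 40 = n := by
      rw [hxd, ← Real.rpow_natCast, ← Real.rpow_mul hn0.le]; norm_num
    have hlogn : 0 ≤ Real.log n := Real.log_nonneg hn1'
    have hm1 : L * Real.log n ≤ m n := Nat.le_ceil _
    have hm2 : (m n : ℝ) < L * Real.log n + 1 := Nat.ceil_lt_add_one (by positivity)
    set p := 2 * m n + 1 + 1 with hpd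
    have hpx : (p : ℝ) + 1 ≤ x := by
      rw [hpd]; push_cast; linarith
    -- power bounds
    have hθm : θ ^ (m n + 1) ≤ (n : ℝ)⁻¹ := by
      rw [← Real.rpow_natCast]
      calc θ ^ ((m n + 1 : ℕ) : ℝ) ≤ θ ^ (L * Real.log n) := by
            apply Real.rpow_le_rpow_of_exponent_ge hθ0 hθ1.le
            push_cast; linarith
        _ = (n : ℝ)⁻¹ := by
            rw [Real.rpow_def_of_pos hθ0, show Real.log θ * (L * Real.log n) = (L * Real.log θ) * Real.log n by ring,
              hLθ, neg_one_mul, Real.exp_neg, Real.exp_log hn0]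
    have hθm2 : θ ^ 2 * (n : ℝ)⁻¹ ≤ θ ^ (m n + 1) := by
      rw [← Real.rpow_natCast θ (m n + 1)]
      calc θ ^ 2 * (n : ℝ)⁻¹ = θ ^ (L * Real.log n + 2) := by
            rw [Real.rpow_add hθ0, Real.rpow_def_of_pos hθ0, show Real.log θ * (L * Real.log n) = (L * Real.log θ) * Real.log n by ring,
              hLθ, neg_one_mul, Real.exp_neg, Real.exp_log hn0, mul_comm]
            congr 1; exact (Real.rpow_natCast θ 2).symm
        _ ≤ _ := by
            apply Real.rpow_le_rpow_of_exponent_ge hθ0 hθ1.le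
            push_cast; linarith
    have hpe : θ ^ p = (θ ^ (m n + 1)) ^ 2 := by rw [← pow_mul, hpd]; congr 1; ring
    have hp1 : θ ^ p ≤ ((n : ℝ) ^ 2)⁻¹ := by
      rw [hpe, ← inv_pow]
      exact pow_le_pow_left₀ (by positivity) hθm 2
    have hp2 : θ ^ 4 * ((n : ℝ) ^ 2)⁻¹ ≤ θ ^ p := by
      rw [hpe, ← inv_pow]
      calc _ = (θ ^ 2 * (n : ℝ)⁻¹) ^ 2 := by ring
        _ ≤ _ := pow_le_pow_left₀ (by positivity) hθm2 2
    -- r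
    set r := Real.sqrt (s n) with hr
    have hsn0 : (0 : ℝ) < s n := by
      have h1 : 0 < (s n : ℝ) / n ^ 2 := lt_trans (by positivity) hsn
      by_contra hcon
      have : (s n : ℝ) = 0 := le_antisymm (not_lt.1 hcon) (by positivity)
      rw [this] at h1; simp at h1
    have hr0 : 0 < r := Real.sqrt_pos.2 hsn0
    have hr2 : r ^ 2 = s n := Real.sq_sqrt hsn0.le
    have har : a * n ≤ r := by
      apply Real.le_sqrt_of_sq_le
      rw [lt_div_iff₀ (by positivity)] at hsn
      nlinarith
    have hnr : n / r ≤ a⁻¹ := by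
      rw [div_le_iff₀ hr0, inv_mul_eq_div, le_div_iff₀ (by linarith)]
      linarith
    have hnr1 : n / r ≤ 1 := hnr.trans (inv_le_one_of_one_le₀ (by linarith))
    have hcond : (Fintype.card (Fin p) : ℝ) * (((n : ℝ) ^ 4)⁻¹ * BB ε (Fintype.card (Fin p))) ≤ ε / 2 := by
      rw [Fintype.card_fin]
      unfold BB
      rw [← hθ]
      have hx0 : 0 < x := by linarith
      have hi : (θ ^ p)⁻¹ ≤ (θ ^ 4)⁻¹ * (n : ℝ) ^ 2 := by
        calc (θ ^ p)⁻¹ ≤ (θ ^ 4 * ((n : ℝ) ^ 2)⁻¹)⁻¹ := by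
              apply inv_anti₀ (by positivity) hp2
          _ = _ := by rw [mul_inv, inv_inv]
      have hp0 : (0 : ℝ) ≤ p := by positivity
      calc (p : ℝ) * (((n : ℝ) ^ 4)⁻¹ * (512 * (p + 1) ^ 4 / (ε ^ 2 * θ ^ p)))
          = (p * (p + 1) ^ 4) * (((n : ℝ) ^ 4)⁻¹ * (512 / ε ^ 2)) * (θ ^ p)⁻¹ := by
            field_simp
        _ ≤ (x * x ^ 4) * (((n : ℝ) ^ 4)⁻¹ * (512 / ε ^ 2)) * ((θ ^ 4)⁻¹ * (n : ℝ) ^ 2) := by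
            gcongr
            linarith
        _ = (512 * (θ ^ 4)⁻¹ / ε ^ 2) * (x ^ 75)⁻¹ := by
            rw [← hx40]; field_simp
        _ ≤ (512 * (θ ^ 4)⁻¹ / ε ^ 2) * x⁻¹ := by
            gcongr
            exact le_self_pow₀ hx1 (by norm_num)
        _ ≤ ε / 2 := by
            rw [div_le_iff₀ (by positivity)] at hx2
            rw [← div_eq_mul_inv, div_le_iff₀ hx0]
            linarith
    have hmain := psi_upper' (V := Fin p) (finRotate p) (r := r) (n := n) (m := x ^ 4) (κ := 1) (ε := ε) hr0
      (one_le_pow₀ hx1) (by rw [← hx40]; ring) le_rfl hnr1 hε hε1 hcond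
    rw [hr2, cyc_finRotate, Fintype.card_fin, ← hθ] at hmain
    have hexp : (1 + (p : ℝ) * (1 / x ^ 4)) ^ p ≤ Real.exp 1 := by
      have hx0 : 0 < x := by linarith
      calc (1 + (p : ℝ) * (1 / x ^ 4)) ^ p ≤ (Real.exp (p * (1 / x ^ 4))) ^ p := by
            gcongr
            rw [add_comm]; exact Real.add_one_le_exp _
        _ = Real.exp (p * (p * (1 / x ^ 4))) := by rw [← Real.exp_nat_mul]
        _ ≤ Real.exp 1 := by
            apply Real.exp_le_exp.2
            have hp0 : (0 : ℝ) ≤ p := by positivity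
            calc (p : ℝ) * (p * (1 / x ^ 4)) ≤ x * (x * (1 / x ^ 4)) := by
                  have : (p : ℝ) ≤ x := by linarith
                  gcongr
              _ = (x ^ 2)⁻¹ := by field_simp
              _ ≤ 1 := inv_le_one_of_one_le₀ (one_le_pow₀ hx1)
    rw [div_le_iff₀ (by positivity)]
    have hK0 : 0 ≤ 2 * (1 + ε) / θ := by positivity
    calc psi (finRotate p) (s n) n ≤ (r * n) ^ p * (n : ℝ) ^ (2 * 1) *
          ((1 + (p : ℝ) * (1 / x ^ 4)) ^ p * (2 * (2 * (1 + ε) / θ) ^ p) ^ 1) := hmain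
      _ ≤ (r * n) ^ p * (n : ℝ) ^ (2 * 1) * (Real.exp 1 * (2 * (a * θ ^ 2) ^ p) ^ 1) := by
          gcongr
      _ = 2 * Real.exp 1 * (n : ℝ) ^ 2 * (θ ^ p) ^ 2 * (r * (a * n)) ^ p := by
          rw [mul_pow, mul_pow a (θ ^ 2) p, mul_pow r (a * n) p, mul_pow a (n : ℝ) p, ← pow_mul θ 2 p,
            ← pow_mul θ p 2, mul_comm 2 p]
          ring
      _ ≤ 2 * Real.exp 1 * (n : ℝ) ^ 2 * (((n : ℝ) ^ 2)⁻¹) ^ 2 * (r * r) ^ p := by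
          gcongr
      _ = 2 * Real.exp 1 * ((n : ℝ) ^ 2)⁻¹ * (s n : ℝ) ^ p := by
          rw [← hr2, ← sq]; field_simp
  refine tendsto_of_tendsto_of_tendsto_of_le_of_le' tendsto_const_nhds ?_ ?_ hup
  · rw [show (0 : ℝ) = (2 * Real.exp 1) * 0 by ring]
    apply Tendsto.const_mul
    apply tendsto_inv_atTop_zero.comp
    exact (tendsto_pow_atTop (by norm_num)).comp tendsto_natCast_atTop_atTop
  · apply Eventually.of_forall
    intro n
    have : 0 ≤ psi (finRotate (2 * m n + 1 + 1)) (s n) n := by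
      unfold psi
      apply sum_nonneg
      intro α _
      positivity
    positivity
end Asym
end PPT

namespace PPT
section Final
open Equiv Equiv.Perm Finset
variable {n s : ℕ}

/-- real trace moments -/
noncomputable def TR (k : ℕ) (g : (Fin n × Fin n) × Fin s → ℂ) : ℝ := (MM g ^ k).trace.re

lemma TR_ofReal (k : ℕ) (g : (Fin n × Fin n) × Fin s → ℂ) : ((TR k g : ℝ) : ℂ) = (MM g ^ k).trace := by
  apply Complex.ext
  · simp [TR]
  · simp [herm_trace_im ((MM_herm g).pow k)]

lemma TR_int (k : ℕ) : Integrable (fun g : (Fin n × Fin n) × Fin s → ℂ => TR (k + 1) g) (gm _) := by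
  unfold TR
  simp only [trace_pow]
  exact (trg_int _).re

lemma TR_mean (k : ℕ) : ∫ g : (Fin n × Fin n) × Fin s → ℂ, TR (k + 1) g ∂(gm _) = psi (finRotate (k + 1)) s n := by
  have h := trg_mean (n := n) (s := s) (finRotate (k + 1))
  simp only [← trace_pow, ← TR_ofReal] at h
  rw [integral_complex_ofReal] at h
  exact_mod_cast h

lemma TR_mul (k l : ℕ) (g : (Fin n × Fin n) × Fin s → ℂ) : ((TR (k + 1) g * TR (l + 1) g : ℝ) : ℂ) =
    trg (Equiv.Perm.sumCongr (finRotate (k + 1)) (finRotate (l + 1))) (MM g) := by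
  rw [trg_sum, ← trace_pow, ← trace_pow, ← TR_ofReal, ← TR_ofReal]
  push_cast; rfl

lemma TR_int2 (k l : ℕ) : Integrable (fun g : (Fin n × Fin n) × Fin s → ℂ => TR (k + 1) g * TR (l + 1) g) (gm _) := by
  have h := (trg_int (n := n) (s := s) (Equiv.Perm.sumCongr (finRotate (k + 1)) (finRotate (l + 1)))).re
  simp only [← TR_mul] at h
  simpa using h

lemma TR_mean2 (k l : ℕ) : ∫ g : (Fin n × Fin n) × Fin s → ℂ, TR (k + 1) g * TR (l + 1) g ∂(gm _) =
    psi (Equiv.Perm.sumCongr (finRotate (k + 1)) (finRotate (l + 1))) s n := by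
  have h := trg_mean (n := n) (s := s) (Equiv.Perm.sumCongr (finRotate (k + 1)) (finRotate (l + 1)))
  simp only [← TR_mul] at h
  rw [integral_complex_ofReal] at h
  exact_mod_cast h

lemma upper_prob (hs : 0 < s) (m : ℕ) : (gm ((Fin n × Fin n) × Fin s)).real {g | ¬ PEv g} ≤
    psi (finRotate (2 * m + 1 + 1)) s n / (s : ℝ) ^ (2 * m + 1 + 1) := by
  have hs' : (0 : ℝ) < s := by exact_mod_cast hs
  have e : 2 * m + 1 + 1 = 2 * (m + 1) := by ring
  have h := mul_meas_ge_le_integral_of_nonneg (μ := gm ((Fin n × Fin n) × Fin s))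
    (f := fun g => TR (2 * m + 1 + 1) g) (ae_of_all _ fun g => by
      simp only [Pi.zero_apply, TR, e]; exact trace_even_nonneg (MM_herm g) _) (TR_int _) ((s : ℝ) ^ (2 * m + 1 + 1))
  rw [TR_mean] at h
  rw [le_div_iff₀ (by positivity), mul_comm]
  refine le_trans ?_ h
  refine mul_le_mul_of_nonneg_left (measureReal_mono ?_ (measure_ne_top _ _)) (by positivity)
  intro g hg
  simp only [Set.mem_setOf_eq, TR, e] at hg ⊢
  rw [PEv_iff] at hg
  exact not_psd_trace (MM_herm g) hs'.le hg _

lemma second_moment {J : Type*} [Fintype J] (cf : J → ℝ) (e : J → ℕ) (μ : ℝ) :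
    Integrable (fun g : (Fin n × Fin n) × Fin s → ℂ => (∑ j, cf j * TR (e j + 1) g - μ) ^ 2) (gm _) ∧
    ∫ g : (Fin n × Fin n) × Fin s → ℂ, (∑ j, cf j * TR (e j + 1) g - μ) ^ 2 ∂(gm _) =
      ∑ i, ∑ j, cf i * cf j * psi (Equiv.Perm.sumCongr (finRotate (e i + 1)) (finRotate (e j + 1))) s n
      - 2 * μ * ∑ j, cf j * psi (finRotate (e j + 1)) s n + μ ^ 2 := by
  have ex : ∀ g : (Fin n × Fin n) × Fin s → ℂ, (∑ j, cf j * TR (e j + 1) g - μ) ^ 2 =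
      (∑ i, ∑ j, cf i * cf j * (TR (e i + 1) g * TR (e j + 1) g) - 2 * μ * ∑ j, cf j * TR (e j + 1) g) + μ ^ 2 := by
    intro g
    have : (∑ j, cf j * TR (e j + 1) g) ^ 2 = ∑ i, ∑ j, cf i * cf j * (TR (e i + 1) g * TR (e j + 1) g) := by
      rw [sq, sum_mul_sum]
      exact sum_congr rfl fun i _ => sum_congr rfl fun j _ => by ring
    rw [← this]; ring
  have i1 : Integrable (fun g : (Fin n × Fin n) × Fin s → ℂ =>
      ∑ i, ∑ j, cf i * cf j * (TR (e i + 1) g * TR (e j + 1) g)) (gm _) :=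
    integrable_finsetSum _ fun i _ => integrable_finsetSum _ fun j _ => (TR_int2 _ _).const_mul _
  have i2 : Integrable (fun g : (Fin n × Fin n) × Fin s → ℂ => ∑ j, cf j * TR (e j + 1) g) (gm _) :=
    integrable_finsetSum _ fun j _ => (TR_int _).const_mul _
  simp only [ex]
  refine ⟨(i1.sub (i2.const_mul _)).add (integrable_const _), ?_⟩
  rw [integral_add (f := fun g : (Fin n × Fin n) × Fin s → ℂ => ∑ i, ∑ j, cf i * cf j * (TR (e i + 1) g * TR (e j + 1) g) - 2 * μ * ∑ j, cf j * TR (e j + 1) g) (i1.sub (i2.const_mul _)) (integrable_const _), integral_sub i1 (i2.const_mul _),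
    integral_finsetSum _ (fun i _ => integrable_finsetSum _ fun j _ => (TR_int2 _ _).const_mul _),
    integral_const_mul, integral_finsetSum _ (fun j _ => (TR_int _).const_mul _)]
  congr 1
  · congr 1
    · apply sum_congr rfl
      intro i _
      rw [integral_finsetSum _ fun j _ => (TR_int2 _ _).const_mul _]
      apply sum_congr rfl
      intro j _
      rw [integral_const_mul, TR_mean2]
    · congr 1
      apply sum_congr rfl
      intro j _
      rw [integral_const_mul, TR_mean]
  · simp

lemma psi_one_lim (k : ℕ) (r : ℕ → ℝ) {κ : ℝ} (hκ : 1 ≤ κ)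
    (hr : ∀ᶠ n : ℕ in atTop, 0 < r n ∧ n / r n ≤ κ) :
    Tendsto (fun n : ℕ => ((r n * n) ^ (k + 1) * (n : ℝ) ^ 2)⁻¹ * psi (finRotate (k + 1)) (r n ^ 2) n) atTop
      (nhds (hseq 0 (k + 1))) := by
  have h := psi_lim (finRotate (k + 1)) r hκ hr
  rw [cyc_finRotate, cycs_of_trans _ (sameCycle_finRotate k), prod_singleton, card_univ, Fintype.card_fin] at h
  refine h.congr fun n => ?_
  rw [div_eq_inv_mul]

lemma psi_two_lim (k l : ℕ) (r : ℕ → ℝ) {κ : ℝ} (hκ : 1 ≤ κ)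
    (hr : ∀ᶠ n : ℕ in atTop, 0 < r n ∧ n / r n ≤ κ) :
    Tendsto (fun n : ℕ => ((r n * n) ^ (k + 1) * (n : ℝ) ^ 2)⁻¹ * ((r n * n) ^ (l + 1) * (n : ℝ) ^ 2)⁻¹ *
      psi (Equiv.Perm.sumCongr (finRotate (k + 1)) (finRotate (l + 1))) (r n ^ 2) n) atTop
      (nhds (hseq 0 (k + 1) * hseq 0 (l + 1))) := by
  have h := psi_lim (Equiv.Perm.sumCongr (finRotate (k + 1)) (finRotate (l + 1))) r hκ hr
  have hc := cycs_sum _ _ (sameCycle_finRotate k) (sameCycle_finRotate l)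
  have hcc : cyc (Equiv.Perm.sumCongr (finRotate (k + 1)) (finRotate (l + 1))) = 2 := by
    unfold cyc; rw [hc, card_pair inl_ne_inr]
  rw [hcc, hc, prod_pair inl_ne_inr, card_map, card_map, card_univ, card_univ, Fintype.card_fin, Fintype.card_fin,
    Fintype.card_sum, Fintype.card_fin, Fintype.card_fin] at h
  refine h.congr fun n => ?_
  rw [div_eq_inv_mul, ← mul_inv]
  congr 2
  rw [pow_add]; ring

lemma mu_neg {a : ℝ} (ha : a < 2) : ∃ K : ℕ, hseq 0 (2 * K + 5) + (a - 4) * hseq 0 (2 * K + 4)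
    + (4 - 4 * a) * hseq 0 (2 * K + 3) + 4 * a * hseq 0 (2 * K + 2) < 0 := by
  obtain ⟨K, hK⟩ := exists_nat_gt ((18 * a - 24) / (16 - 8 * a))
  rw [div_lt_iff₀ (by linarith)] at hK
  refine ⟨K, ?_⟩
  rw [show 2 * K + 5 = 2 * (K + 2) + 1 by ring, show 2 * K + 4 = 2 * (K + 2) by ring,
    show 2 * K + 3 = 2 * (K + 1) + 1 by ring, show 2 * K + 2 = 2 * (K + 1) by ring,
    (cat_eq _).2, (cat_eq _).1, (cat_eq _).2, (cat_eq _).1]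
  have h1 := succ_mul_catalan_eq_centralBinom (K + 2)
  have h2 := succ_mul_catalan_eq_centralBinom (K + 1)
  have h3 := Nat.succ_mul_centralBinom_succ (K + 1)
  rw [show K + 1 + 1 = K + 2 by ring] at h2 h3
  rw [← h1, ← h2] at h3
  have h4 : ((K : ℝ) + 2) * (((K : ℝ) + 3) * catalan (K + 2)) = 2 * (2 * (K + 1) + 1) * ((K + 2) * catalan (K + 1)) := by
    exact_mod_cast h3
  have h5 : ((K : ℝ) + 3) * catalan (K + 2) = (4 * K + 6) * catalan (K + 1) := by
    have : (K : ℝ) + 2 ≠ 0 := by positivity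
    apply mul_left_cancel₀ this
    rw [h4]; ring
  have hpos : (0 : ℝ) < catalan (K + 1) := by
    have : 0 < catalan (K + 1) := by
      by_contra hcon
      have : catalan (K + 1) = 0 := by omega
      rw [this, mul_zero] at h2
      exact (Nat.centralBinom_ne_zero _) h2.symm
    exact_mod_cast this
  have h6 : ((K : ℝ) + 3) * (0 + (a - 4) * catalan (K + 2) + (4 - 4 * a) * 0 + 4 * a * catalan (K + 1)) < 0 := by
    calc _ = (a - 4) * (((K : ℝ) + 3) * catalan (K + 2)) + 4 * a * (K + 3) * catalan (K + 1) := by ring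
      _ = (18 * a - 24 - K * (16 - 8 * a)) * catalan (K + 1) := by rw [h5]; ring
      _ < 0 := mul_neg_of_neg_of_pos (by linarith) hpos
  by_contra hcon
  have := mul_nonneg (a := (K : ℝ) + 3) (by positivity) (not_lt.1 hcon)
  linarith

theorem lower_asym {c : ℝ} (hc0 : 0 < c) (hc : c < 4) (s : ℕ → ℕ)
    (hsc : Tendsto (fun n : ℕ => (s n : ℝ) / (n ^ 2)) atTop (nhds c)) :
    Tendsto (fun n : ℕ => (gm ((Fin n × Fin n) × Fin (s n))).real {g | PEv g}) atTop (nhds 0) := by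
  obtain ⟨a, ha0, ha, hac⟩ : ∃ a : ℝ, 0 < a ∧ a < 2 ∧ c < a ^ 2 := by
    have : Real.sqrt c < 2 := by
      rw [Real.sqrt_lt' (by norm_num)]; linarith
    obtain ⟨a, h1, h2⟩ := exists_between this
    have ha0 : 0 < a := lt_of_le_of_lt (Real.sqrt_nonneg c) h1
    exact ⟨a, ha0, h2, (Real.sqrt_lt' ha0).1 h1⟩
  obtain ⟨K, hK⟩ := mu_neg ha
  set r : ℕ → ℝ := fun n => Real.sqrt (s n) with hr
  have hr2 : ∀ n, r n ^ 2 = s n := fun n => Real.sq_sqrt (by positivity)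
  have hpos : ∀ᶠ n : ℕ in atTop, 0 < n ∧ 0 < r n := by
    filter_upwards [hsc.eventually (lt_mem_nhds hc0), eventually_gt_atTop 0] with n h1 h2
    refine ⟨h2, Real.sqrt_pos.2 ?_⟩
    by_contra hcon
    have : (s n : ℝ) = 0 := le_antisymm (not_lt.1 hcon) (by positivity)
    rw [this] at h1; simp at h1
  set κ := Real.sqrt c⁻¹ + 1 with hκd
  have hκ : 1 ≤ κ := by rw [hκd]; linarith [Real.sqrt_nonneg c⁻¹]
  have hrκ : ∀ᶠ n : ℕ in atTop, 0 < r n ∧ n / r n ≤ κ := by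
    have h1 := (Real.continuous_sqrt.tendsto _).comp (hsc.inv₀ hc0.ne')
    filter_upwards [h1.eventually (gt_mem_nhds (show Real.sqrt c⁻¹ < κ by rw [hκd]; linarith)), hpos] with n h2 h3
    refine ⟨h3.2, ?_⟩
    simp only [Function.comp_apply, inv_div] at h2
    rw [Real.sqrt_div (by positivity), Real.sqrt_sq (by positivity)] at h2
    exact h2.le
  let cf0 : Fin 4 → ℝ := ![1, a - 4, 4 - 4 * a, 4 * a]
  let e : Fin 4 → ℕ := ![2 * K + 4, 2 * K + 3, 2 * K + 2, 2 * K + 1]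
  let cf : ℕ → Fin 4 → ℝ := fun n j => cf0 j * ((r n * n) ^ (e j + 1) * (n : ℝ) ^ 2)⁻¹
  set μ : ℝ := ∑ j, cf0 j * hseq 0 (e j + 1) with hμ
  have hμneg : μ < 0 := by
    rw [hμ, Fin.sum_univ_four]
    simpa [cf0, e] using hK
  have hlim : Tendsto (fun n : ℕ => ∫ g : (Fin n × Fin n) × Fin (s n) → ℂ,
      (∑ j, cf n j * TR (e j + 1) g - μ) ^ 2 ∂(gm _)) atTop (nhds 0) := by
    simp only [(second_moment _ _ _).2]
    have h1 : Tendsto (fun n : ℕ => ∑ j, cf n j * psi (finRotate (e j + 1)) (s n) n) atTop (nhds μ) := by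
      apply tendsto_finsetSum
      intro j _
      have := (psi_one_lim (e j) r hκ hrκ).const_mul (cf0 j)
      refine this.congr fun n => ?_
      rw [hr2, ← mul_assoc]
    have h2 : Tendsto (fun n : ℕ => ∑ i, ∑ j, cf n i * cf n j *
        psi (Equiv.Perm.sumCongr (finRotate (e i + 1)) (finRotate (e j + 1))) (s n) n) atTop
        (nhds (∑ i, ∑ j, cf0 i * cf0 j * (hseq 0 (e i + 1) * hseq 0 (e j + 1)))) := by
      apply tendsto_finsetSum
      intro i _
      apply tendsto_finsetSum
      intro j _
      have := (psi_two_lim (e i) (e j) r hκ hrκ).const_mul (cf0 i * cf0 j)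
      refine this.congr fun n => ?_
      rw [hr2]
      simp only [cf]
      ring
    have e2 : ∑ i, ∑ j, cf0 i * cf0 j * (hseq 0 (e i + 1) * hseq 0 (e j + 1)) = μ ^ 2 := by
      rw [hμ, sq, sum_mul_sum]
      exact sum_congr rfl fun i _ => sum_congr rfl fun j _ => by ring
    rw [e2] at h2
    have h3 := (h2.sub (h1.const_mul (2 * μ))).add_const (μ ^ 2)
    rw [show μ ^ 2 - 2 * μ * μ + μ ^ 2 = 0 by ring] at h3
    exact h3
  have hlim2 := hlim.div_const (μ ^ 2)
  rw [zero_div] at hlim2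
  refine tendsto_of_tendsto_of_tendsto_of_le_of_le' tendsto_const_nhds hlim2
    (Eventually.of_forall fun n => measureReal_nonneg) ?_
  filter_upwards [hpos, hsc.eventually (gt_mem_nhds hac)] with n hn hsn
  have hn0 : (0 : ℝ) < n := by exact_mod_cast hn.1
  have hμ2 : 0 < μ ^ 2 := by
    have := hμneg.ne
    positivity
  rw [le_div_iff₀ hμ2, mul_comm]
  have hM := mul_meas_ge_le_integral_of_nonneg (μ := gm ((Fin n × Fin n) × Fin (s n)))
    (f := fun g => (∑ j, cf n j * TR (e j + 1) g - μ) ^ 2) (ae_of_all _ fun g => sq_nonneg _)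
    (second_moment (cf n) e μ).1 (μ ^ 2)
  refine le_trans ?_ hM
  refine mul_le_mul_of_nonneg_left (measureReal_mono ?_ (measure_ne_top _ _)) (by positivity)
  intro g hg
  simp only [Set.mem_setOf_eq] at hg ⊢
  rw [PEv_iff] at hg
  have hb : 0 < r n * n := mul_pos hn.2 hn0
  have hsb : (s n : ℝ) ≤ a * (r n * n) := by
    have h1 : r n ≤ a * n := by
      apply Real.sqrt_le_iff.2
      refine ⟨by positivity, ?_⟩
      rw [div_lt_iff₀ (by positivity)] at hsn
      nlinarith
    rw [← hr2]
    nlinarith [hn.2]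
  have hpoly := psd_poly (MM_herm g) hg hsb K
  have hZ : 0 ≤ ∑ j, cf n j * TR (e j + 1) g := by
    rw [Fin.sum_univ_four]
    simp only [cf, cf0, e, Matrix.cons_val]
    simp only [TR]
    set b := r n * n with hbd
    have : 0 ≤ (b ^ (2 * K + 5) * (n : ℝ) ^ 2)⁻¹ * ((MM g ^ (2 * K + 5)).trace.re + (a - 4) * b * (MM g ^ (2 * K + 4)).trace.re
      + (4 - 4 * a) * b ^ 2 * (MM g ^ (2 * K + 3)).trace.re + 4 * a * b ^ 3 * (MM g ^ (2 * K + 2)).trace.re) := by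
      positivity
    refine this.trans_eq ?_
    simp only [show 2 * K + 4 + 1 = 2 * K + 5 by ring, show 2 * K + 3 + 1 = 2 * K + 4 by ring,
      show 2 * K + 2 + 1 = 2 * K + 3 by ring, show 2 * K + 1 + 1 = 2 * K + 2 by ring]
    rw [show b ^ (2 * K + 5) = b ^ (2 * K + 2) * b ^ 3 by ring, show b ^ (2 * K + 4) = b ^ (2 * K + 2) * b ^ 2 by ring,
      show b ^ (2 * K + 3) = b ^ (2 * K + 2) * b by ring]
    field_simp
  nlinarith

theorem transfer {Ω : Type*} [MeasurableSpace Ω] (P : Measure Ω) [IsProbabilityMeasure P]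
    (G : Ω → Matrix (Fin n × Fin n) (Fin s) ℂ)
    (hindep : iIndepFun (fun (q : (Fin n × Fin n) × Fin s) ω => G ω q.1 q.2) P)
    (hgauss : ∀ q : (Fin n × Fin n) × Fin s, Measure.map (fun ω => G ω q.1 q.2) P = stdComplexGaussian)
    (S : Set ((Fin n × Fin n) × Fin s → ℂ)) :
    P {ω | (fun q : (Fin n × Fin n) × Fin s => G ω q.1 q.2) ∈ S} ≤ gm _ S := by
  have hm : ∀ q : (Fin n × Fin n) × Fin s, AEMeasurable (fun ω => G ω q.1 q.2) P := by
    intro q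
    by_contra hcon
    have := hgauss q
    rw [Measure.map_of_not_aemeasurable hcon] at this
    exact (IsProbabilityMeasure.ne_zero stdComplexGaussian) this.symm
  have h := (iIndepFun_iff_map_fun_eq_pi_map hm).1 hindep
  simp only [hgauss] at h
  have h2 := Measure.le_map_apply (f := fun ω (q : (Fin n × Fin n) × Fin s) => G ω q.1 q.2) (μ := P)
    (aemeasurable_pi_lambda _ hm) S
  rw [h] at h2
  exact h2
end Final
end PPT

theorem ppt_threshold_balanced
    {Ω : Type*} [MeasurableSpace Ω] (P : Measure Ω) [IsProbabilityMeasure P]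
    (c : ℝ) (hc : 0 < c) (hc4 : c ≠ 4)
    (s : ℕ → ℕ) (hs : ∀ n, 0 < s n)
    (hsc : Tendsto (fun n : ℕ => (s n : ℝ) / (n ^ 2)) atTop (nhds c))
    (G : ∀ n : ℕ, Ω → Matrix (Fin n × Fin n) (Fin (s n)) ℂ)
    (hindep : ∀ n, iIndepFun
      (fun (q : (Fin n × Fin n) × Fin (s n)) ω => G n ω q.1 q.2) P)
    (hgauss : ∀ n, ∀ q : (Fin n × Fin n) × Fin (s n),
      Measure.map (fun ω => G n ω q.1 q.2) P = stdComplexGaussian) :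
    (c < 4 → Tendsto (fun n : ℕ =>
        P {ω | (partialTranspose
            (((G n ω * (G n ω)ᴴ).trace)⁻¹ • (G n ω * (G n ω)ᴴ))).PosSemidef})
      atTop (nhds 0)) ∧
    (4 < c → Tendsto (fun n : ℕ =>
        P {ω | (partialTranspose
            (((G n ω * (G n ω)ᴴ).trace)⁻¹ • (G n ω * (G n ω)ᴴ))).PosSemidef})
      atTop (nhds 1)) := by
  constructor
  · intro h4
    have h := PPT.lower_asym hc h4 s hsc
    have h' := ENNReal.tendsto_ofReal h
    rw [ENNReal.ofReal_zero] at h'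
    refine tendsto_of_tendsto_of_tendsto_of_le_of_le tendsto_const_nhds h' (fun _ => bot_le) ?_
    intro n
    simp only
    rw [ofReal_measureReal (measure_ne_top _ _)]
    exact PPT.transfer P (G n) (hindep n) (hgauss n) {g | PPT.PEv g}
  · intro h4
    obtain ⟨m, hm⟩ := PPT.upper_asym h4 s hsc
    have h' := ENNReal.tendsto_ofReal hm
    rw [ENNReal.ofReal_zero] at h'
    have h1 : Tendsto (fun n => 1 - ENNReal.ofReal (PPT.psi (finRotate (2 * m n + 1 + 1)) (s n) n / (s n : ℝ) ^ (2 * m n + 1 + 1)))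
        atTop (nhds 1) := by
      have := ENNReal.Tendsto.sub (tendsto_const_nhds (x := (1 : ENNReal))) h' (Or.inl ENNReal.one_ne_top)
      simpa using this
    refine tendsto_of_tendsto_of_tendsto_of_le_of_le h1 tendsto_const_nhds ?_ (fun _ => prob_le_one)
    intro n
    simp only
    rw [tsub_le_iff_right]
    set A := {ω | (partialTranspose (((G n ω * (G n ω)ᴴ).trace)⁻¹ • (G n ω * (G n ω)ᴴ))).PosSemidef} with hA
    have h2 : (1 : ENNReal) ≤ P A + P Aᶜ := by
      calc (1 : ENNReal) = P Set.univ := measure_univ.symm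
        _ = P (A ∪ Aᶜ) := by rw [Set.union_compl_self]
        _ ≤ _ := measure_union_le _ _
    refine h2.trans ?_
    gcongr
    calc P Aᶜ ≤ PPT.gm _ {g | ¬ PPT.PEv g} := PPT.transfer P (G n) (hindep n) (hgauss n) {g | ¬ PPT.PEv g}
      _ = ENNReal.ofReal ((PPT.gm _).real {g | ¬ PPT.PEv g}) :=
          (ofReal_measureReal (measure_ne_top _ _)).symm
      _ ≤ _ := ENNReal.ofReal_le_ofReal (PPT.upper_prob (hs n) (m n))
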